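/- Strong forward Brascamp–Lieb inequality (two-function version with envelopes): let α ∈ [0,α_max], β ∈ [0,β_max], and let p*, q* ∈ [0,∞] be such that (1/p*, 1/q*) is a subgradient of Θ̲ at (α,β). Then for every p, q ∈ (0,∞), every n ≥ 1, and all measurable f : 𝒳ⁿ → [0,∞), g : 𝒴ⁿ → [0,∞) (neither a.e. zero) such that (1/n) Ent_{p,p*}(f) ≥ α if p ≥ p* and (1/n) Ent_{p,p*}(f) ≤ α if p ≤ p*, and likewise (1/n) Ent_{q,q*}(g) ≥ β if q ≥ q* and ≤ β if q ≤ q*, one has ⟨f,g⟩ ≤ exp(−n (Θ̲(α,β) − α/p − β/q)) · ‖f‖_p ‖g‖_q. -/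

import Mathlib

open MeasureTheory ProbabilityTheory Set Filter
open scoped ENNReal NNReal BigOperators Classical Topology

noncomputable section

namespace BL

variable {X : Type*} {Y : Type*} [MeasurableSpace X] [MeasurableSpace Y]

/-! ### Extended logarithm, exponential, and division conventions -/

/-- Extended logarithm `ℝ≥0∞ → EReal`, with `log 0 = ⊥` and `log ⊤ = ⊤`. -/
def elog (x : ℝ≥0∞) : EReal :=
  if x = 0 then ⊥ else if x = ⊤ then ⊤ else ((Real.log x.toReal : ℝ) : EReal)

/-- Extended exponential `EReal → ℝ≥0∞`, with `exp ⊥ = 0` and `exp ⊤ = ⊤`. -/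
def eexp (x : EReal) : ℝ≥0∞ :=
  if x = ⊥ then 0 else if x = ⊤ then ⊤ else ENNReal.ofReal (Real.exp x.toReal)

/-- Division of an extended real by a real, with the conventions `a/0 = +∞` for `a > 0`,
`a/0 = -∞` for `a < 0` and `0/0 = 0`. -/
def ediv (x : EReal) (c : ℝ) : EReal :=
  if c = 0 then (if 0 < x then ⊤ else if x < 0 then ⊥ else 0)
  else x * ((c⁻¹ : ℝ) : EReal)

/-- Division of a real by an extended real, with the convention `t/(±∞) = 0`. -/
def divE (t : ℝ) (r : EReal) : EReal :=
  if r = ⊤ ∨ r = ⊥ then 0 else ((t / r.toReal : ℝ) : EReal)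

/-- Hölder conjugate, as an extended real (`conj 1 = ⊤`). -/
def conj (q : ℝ) : EReal := if q = 1 then ⊤ else ((q / (q - 1) : ℝ) : EReal)

/-! ### Norms with a real (possibly negative) exponent -/

/-- `p`-"norm" of an `ℝ≥0∞`-valued function (`p` a nonzero real). -/
def enorm (P : Measure X) (F : X → ℝ≥0∞) (p : ℝ) : ℝ≥0∞ :=
  (∫⁻ x, F x ^ p ∂P) ^ (1 / p)

/-- `∞`-norm (essential supremum) of an `ℝ≥0∞`-valued function. -/
def enormInf (P : Measure X) (F : X → ℝ≥0∞) : ℝ≥0∞ := essSup F P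

/-- `p`-"norm" of a nonnegative real-valued function. -/
def rnorm (P : Measure X) (f : X → ℝ) (p : ℝ) : ℝ≥0∞ :=
  enorm P (fun x => ENNReal.ofReal (f x)) p

/-- `∞`-norm of a nonnegative real-valued function. -/
def rnormInf (P : Measure X) (f : X → ℝ) : ℝ≥0∞ :=
  enormInf P (fun x => ENNReal.ofReal (f x))

/-! ### Divergences -/

/-- Kullback--Leibler divergence, valued in `EReal` (equal to `⊤` when undefined). -/
def KL (Q P : Measure X) : EReal :=
  if Q ≪ P ∧ Integrable (fun x => Real.log (Q.rnDeriv P x).toReal) Q then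
    ((∫ x, Real.log (Q.rnDeriv P x).toReal ∂Q : ℝ) : EReal)
  else ⊤

/-- Rényi divergence of order `s` (`s = 1` gives the KL divergence). -/
def Renyi (s : ℝ) (Q P : Measure X) : EReal :=
  if s = 1 then KL Q P
  else (((s - 1)⁻¹ : ℝ) : EReal) *
    elog (∫⁻ x, Q.rnDeriv (Q + P) x ^ s * P.rnDeriv (Q + P) x ^ (1 - s) ∂(Q + P))

/-- First marginal of a measure on a product space. -/
def m1 (P : Measure (X × Y)) : Measure X := P.map Prod.fst

/-- Second marginal of a measure on a product space. -/
def m2 (P : Measure (X × Y)) : Measure Y := P.map Prod.snd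

/-- Couplings of a pair of (probability) measures. -/
def couplings (μ : Measure X) (ν : Measure Y) : Set (Measure (X × Y)) :=
  {π | IsProbabilityMeasure π ∧ π.map Prod.fst = μ ∧ π.map Prod.snd = ν}

/-- `𝔻(QX, QY ‖ P)` : minimum relative entropy over couplings. -/
def Dmin (QX : Measure X) (QY : Measure Y) (P : Measure (X × Y)) : EReal :=
  ⨅ (π : Measure (X × Y)) (_ : π ∈ couplings QX QY), KL π P

/-! ### The functions φ and their envelopes -/

/-- `φ̲(s,t)`. -/
def phiL (P : Measure (X × Y)) (s t : ℝ) : EReal :=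
  ⨅ (QX : Measure X) (QY : Measure Y) (_ : IsProbabilityMeasure QX)
    (_ : IsProbabilityMeasure QY) (_ : QX ≪ m1 P) (_ : QY ≪ m2 P)
    (_ : KL QX (m1 P) = (s : EReal)) (_ : KL QY (m2 P) = (t : EReal)),
    Dmin QX QY P

/-- `φ̄(s,t)`. -/
def phiU (P : Measure (X × Y)) (s t : ℝ) : EReal :=
  ⨆ (QX : Measure X) (QY : Measure Y) (_ : IsProbabilityMeasure QX)
    (_ : IsProbabilityMeasure QY) (_ : QX ≪ m1 P) (_ : QY ≪ m2 P)
    (_ : KL QX (m1 P) = (s : EReal)) (_ : KL QY (m2 P) = (t : EReal)),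
    Dmin QX QY P

/-- Lower convex envelope on `[0,∞)²`, via convex combinations of (at most) 4 points
(Carathéodory). -/
def lce2 (F : ℝ → ℝ → EReal) (a b : ℝ) : EReal :=
  ⨅ (q : Fin 4 → ℝ) (x : Fin 4 → ℝ × ℝ) (_ : ∀ i, 0 ≤ q i) (_ : ∑ i, q i = 1)
    (_ : ∀ i, 0 ≤ (x i).1 ∧ 0 ≤ (x i).2)
    (_ : ∑ i, q i * (x i).1 = a) (_ : ∑ i, q i * (x i).2 = b),
    ∑ i, (q i : EReal) * F (x i).1 (x i).2

/-- Upper concave envelope on `[0,∞)²`. -/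
def uce2 (F : ℝ → ℝ → EReal) (a b : ℝ) : EReal :=
  ⨆ (q : Fin 4 → ℝ) (x : Fin 4 → ℝ × ℝ) (_ : ∀ i, 0 ≤ q i) (_ : ∑ i, q i = 1)
    (_ : ∀ i, 0 ≤ (x i).1 ∧ 0 ≤ (x i).2)
    (_ : ∑ i, q i * (x i).1 = a) (_ : ∑ i, q i * (x i).2 = b),
    ∑ i, (q i : EReal) * F (x i).1 (x i).2

/-- Lower convex envelope on `[0,∞)`. -/
def lce1 (F : ℝ → EReal) (a : ℝ) : EReal :=
  ⨅ (q : Fin 3 → ℝ) (x : Fin 3 → ℝ) (_ : ∀ i, 0 ≤ q i) (_ : ∑ i, q i = 1)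
    (_ : ∀ i, 0 ≤ x i) (_ : ∑ i, q i * x i = a),
    ∑ i, (q i : EReal) * F (x i)

/-- Upper concave envelope on `[0,∞)`. -/
def uce1 (F : ℝ → EReal) (a : ℝ) : EReal :=
  ⨆ (q : Fin 3 → ℝ) (x : Fin 3 → ℝ) (_ : ∀ i, 0 ≤ q i) (_ : ∑ i, q i = 1)
    (_ : ∀ i, 0 ≤ x i) (_ : ∑ i, q i * x i = a),
    ∑ i, (q i : EReal) * F (x i)

/-- `Θ̲(α,β)`: increasing lower convex envelope of `φ̲`. -/
def ThetaL (P : Measure (X × Y)) (α β : ℝ) : EReal :=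
  ⨅ (s : ℝ) (t : ℝ) (_ : α ≤ s) (_ : β ≤ t), lce2 (phiL P) s t

/-- `Θ̄(α,β)`: increasing upper concave envelope of `φ̄`. -/
def ThetaU (P : Measure (X × Y)) (α β : ℝ) : EReal :=
  ⨆ (s : ℝ) (t : ℝ) (_ : 0 ≤ s) (_ : s ≤ α) (_ : 0 ≤ t) (_ : t ≤ β), uce2 (phiU P) s t

/-- `φ_r(s) = inf_{t ≥ 0} (φ̲(s,t) - t/r)` for `r ∈ [1,∞]` (`r` an extended real). -/
def phiRinf (P : Measure (X × Y)) (r : EReal) (s : ℝ) : EReal :=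
  ⨅ (t : ℝ) (_ : 0 ≤ t), phiL P s t - divE t r

/-- `Θ_r(α)` for `r ∈ [1,∞]`. -/
def ThetaGe1 (P : Measure (X × Y)) (r : EReal) (α : ℝ) : EReal :=
  ⨅ (s : ℝ) (_ : α ≤ s), lce1 (phiRinf P r) s

/-- `φ_r(s) = sup_{t ≥ 0} (φ̄(s,t) - t/r)` for `r ∈ (0,1)`. -/
def phiSupR (P : Measure (X × Y)) (r : ℝ) (s : ℝ) : EReal :=
  ⨆ (t : ℝ) (_ : 0 ≤ t), phiU P s t - divE t (r : EReal)

/-- `φ_r(s)` for `r < 0`. -/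
def phiNeg (P : Measure (X × Y)) (r : ℝ) (s : ℝ) : EReal :=
  ⨆ (QX : Measure X) (_ : IsProbabilityMeasure QX) (_ : QX ≪ m1 P)
    (_ : KL QX (m1 P) = (s : EReal)),
    ⨅ (QY : Measure Y) (_ : IsProbabilityMeasure QY) (_ : QY ≪ m2 P),
      Dmin QX QY P - ediv (KL QY (m2 P)) r

/-- `φ_r(s)` for `r < 1`, `r ≠ 0`. -/
def phiLT1 (P : Measure (X × Y)) (r : ℝ) (s : ℝ) : EReal :=
  if 0 < r then phiSupR P r s else phiNeg P r s

/-- `Θ_r(α)` for `r < 1`, `r ≠ 0`. -/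
def ThetaLT1 (P : Measure (X × Y)) (r : ℝ) (α : ℝ) : EReal :=
  ⨆ (s : ℝ) (_ : 0 ≤ s) (_ : s ≤ α), uce1 (phiLT1 P r) s

/-- `α_max = sup {-log μ(A) : μ(A) > 0}`. -/
def alphaMax (μ : Measure X) : EReal :=
  ⨆ (A : Set X) (_ : MeasurableSet A) (_ : μ A ≠ 0), -elog (μ A)

/-! ### Entropies -/

/-- `Ent_{p,p}(f)`. -/
def entPP (P : Measure X) (f : X → ℝ) (p : ℝ) : EReal :=
  (((∫ x, f x ^ p * Real.log (f x ^ p) ∂P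
      - (∫ x, f x ^ p ∂P) * Real.log (∫ x, f x ^ p ∂P))
     / (∫ x, f x ^ p ∂P) : ℝ) : EReal)

/-- `Ent_{p,p̂}(f)` for a nonzero real `p` and a real `p̂`. -/
def ent (P : Measure X) (f : X → ℝ) (p phat : ℝ) : EReal :=
  if phat = p then entPP P f p
  else if phat = 0 then -elog (P {x | 0 < f x})
  else ((p * phat / (p - phat) : ℝ) : EReal) * (elog (rnorm P f p) - elog (rnorm P f phat))

/-- `Ent_{p,∞}(f)` for a nonzero real `p`. -/
def entTop (P : Measure X) (f : X → ℝ) (p : ℝ) : EReal :=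
  if rnormInf P f = ⊤ then (if 0 < p then ⊤ else ⊥)
  else ((-p : ℝ) : EReal) * (elog (rnorm P f p) - elog (rnormInf P f))

/-- `Ent_{p,p*}(f)` for a nonzero real `p` and `p* ∈ [0,∞]`. -/
def entE (P : Measure X) (f : X → ℝ) (p : ℝ) (ps : ℝ≥0∞) : EReal :=
  if ps = ⊤ then entTop P f p else ent P f p ps.toReal

/-- Admissible functions: measurable, nonnegative, not a.e. zero. -/
def Adm (P : Measure X) (f : X → ℝ) : Prop :=
  Measurable f ∧ (∀ x, 0 ≤ f x) ∧ ¬ f =ᵐ[P] (fun _ => 0)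

/-! ### Products -/

/-- `n`-fold product measure. -/
def piM (n : ℕ) (P : Measure X) : Measure (Fin n → X) := Measure.pi fun _ => P

def fstv {n : ℕ} (z : Fin n → X × Y) : Fin n → X := fun i => (z i).1
def sndv {n : ℕ} (z : Fin n → X × Y) : Fin n → Y := fun i => (z i).2

/-- `⟨f,g⟩ = ∫ f(xⁿ) g(yⁿ) dP^{⊗n}`. -/
def innerFG (P : Measure (X × Y)) (n : ℕ) (f : (Fin n → X) → ℝ) (g : (Fin n → Y) → ℝ) :
    ℝ≥0∞ :=
  ∫⁻ z, ENNReal.ofReal (f (fstv z)) * ENNReal.ofReal (g (sndv z)) ∂(piM n P)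

/-- The set `A × B` viewed inside `(X × Y)ⁿ`. -/
def prodSet {n : ℕ} (A : Set (Fin n → X)) (B : Set (Fin n → Y)) : Set (Fin n → X × Y) :=
  {z | fstv z ∈ A ∧ sndv z ∈ B}

/-! ### Kernels -/

/-- Product of kernel measures `⊗ᵢ κ(yᵢ)`. -/
def kpi {n : ℕ} (κ : Kernel Y X) (y : Fin n → Y) : Measure (Fin n → X) :=
  Measure.pi fun i => κ (y i)

/-- The conditional expectation operator `P_{X|Y}^{⊗n}(f)`. -/
def condOp {n : ℕ} (κ : Kernel Y X) (f : (Fin n → X) → ℝ) : (Fin n → Y) → ℝ≥0∞ :=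
  fun y => ∫⁻ x, ENNReal.ofReal (f x) ∂(kpi κ y)

/-- `κ` is a regular conditional probability of the first coordinate given the second. -/
def IsCondKernel (P : Measure (X × Y)) (κ : Kernel Y X) : Prop :=
  ∀ (A : Set X) (B : Set Y), MeasurableSet A → MeasurableSet B →
    P (A ×ˢ B) = ∫⁻ y in B, κ y A ∂(m2 P)

/-! ### η and `Λ̲*` -/

/-- The function `η_{p,p̂}(α,s)`. -/
def eta (p phat α : ℝ) (s : EReal) : EReal :=
  if 0 ≤ p ∧ 0 ≤ phat then max (ediv ((α : EReal) - s) p) (ediv ((α : EReal) - s) phat)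
  else if 0 < p ∧ phat < 0 then ediv ((α : EReal) - s) p
  else if 0 < phat ∧ p < 0 then ediv ((α : EReal) - s) phat
  else ⊥

/-- `Λ̲*_{p,q,p̂,q̂}(α,β)` (time sharing variable of size ≤ 4). -/
def LamLstar (P : Measure (X × Y)) (p q phat qhat α β : ℝ) : EReal :=
  ⨅ (w : Fin 4 → ℝ) (QX : Fin 4 → Measure X) (QY : Fin 4 → Measure Y)
    (_ : ∀ i, 0 ≤ w i) (_ : ∑ i, w i = 1)
    (_ : ∀ i, IsProbabilityMeasure (QX i)) (_ : ∀ i, QX i ≪ m1 P)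
    (_ : ∀ i, IsProbabilityMeasure (QY i)) (_ : ∀ i, QY i ≪ m2 P),
    (∑ i, (w i : EReal) * Dmin (QX i) (QY i) P)
      + eta p phat α (∑ i, (w i : EReal) * KL (QX i) (m1 P))
      + eta q qhat β (∑ i, (w i : EReal) * KL (QY i) (m2 P))

/-! ### Sub/supergradients (slopes in `[0,∞]`) -/

def IsSubgrad2 (F : ℝ → ℝ → EReal) (α β : ℝ) (u v : ℝ≥0∞) : Prop :=
  ∀ s t : ℝ, 0 ≤ s → 0 ≤ t →
    F α β + (u : EReal) * ((s - α : ℝ) : EReal) + (v : EReal) * ((t - β : ℝ) : EReal) ≤ F s t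

def IsSupergrad2 (F : ℝ → ℝ → EReal) (α β : ℝ) (u v : ℝ≥0∞) : Prop :=
  ∀ s t : ℝ, 0 ≤ s → 0 ≤ t →
    F s t ≤ F α β + (u : EReal) * ((s - α : ℝ) : EReal) + (v : EReal) * ((t - β : ℝ) : EReal)

def IsSubgrad1 (F : ℝ → EReal) (α : ℝ) (u : ℝ≥0∞) : Prop :=
  ∀ s : ℝ, 0 ≤ s → F α + (u : EReal) * ((s - α : ℝ) : EReal) ≤ F s

def IsSupergrad1 (F : ℝ → EReal) (α : ℝ) (u : ℝ≥0∞) : Prop :=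
  ∀ s : ℝ, 0 ≤ s → F s ≤ F α + (u : EReal) * ((s - α : ℝ) : EReal)

/-!
By Gibbs' variational principle, `log ∫ f g dP^{⊗n} = ∫ log f dQ + ∫ log g dQ - D(Q ‖ P^{⊗n})` for
the law `Q` with density proportional to `f g`; the logarithms are made bounded by restricting to
sets on which `f` and `g` stay away from `0` and `∞`, and monotone convergence removes the
restriction. By the chain rule and the data processing inequality, `D(Q ‖ P^{⊗n})` and the two
marginal divergences of `Q` are controlled by `n` times a point `(s, t, d)` of the convex hull of
the triples `(D(R_X ‖ P_X), D(R_Y ‖ P_Y), D(R ‖ P))`, and `Θ̲` lies below this hull. The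
subgradient inequality at `(α, β)` bounds `d` from below by
`Θ̲(α, β) + (s - α) / p* + (t - β) / q*`, while Gibbs' inequality bounds `∫ log f dQ` by
`n s / p* + log ‖f‖_{p*}`, and the entropy constraint on `f` is exactly what trades `‖f‖_{p*}` for
`‖f‖_p` at the cost `n α (1 / p - 1 / p*)`.
-/

open InformationTheory

section Convexity

variable {E : Type*} [NormedAddCommGroup E] [NormedSpace ℝ E] {C : Set E}

lemma exists_dual_nonpos_on_of_interior_nonempty (hC : Convex ℝ C)
    (hint : (interior C).Nonempty) (h0 : (0 : E) ∉ C) :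
    ∃ l : StrongDual ℝ E, l ≠ 0 ∧ ∀ x ∈ C, l x ≤ 0 := by
  obtain ⟨l, hl⟩ := geometric_hahn_banach_open_point hC.interior isOpen_interior
    (fun h => h0 (interior_subset h))
  refine ⟨l, ?_, fun x hx => ?_⟩
  · rintro rfl
    obtain ⟨x, hx⟩ := hint
    simpa using hl x hx
  · have hclosed : closure (interior C) ⊆ {y | l y ≤ 0} :=
      closure_minimal (fun y hy => (map_zero l ▸ hl y hy).le)
        (isClosed_le l.continuous continuous_const)
    exact hclosed (hC.closure_interior_eq_closure_of_nonempty_interior hint ▸ subset_closure hx)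

variable [FiniteDimensional ℝ E]

lemma exists_dual_eqOn_const_of_interior_eq_empty (hC : Convex ℝ C)
    (hint : ¬ (interior C).Nonempty) {x₀ : E} (hx₀ : x₀ ∈ C) :
    ∃ l : StrongDual ℝ E, l ≠ 0 ∧ ∀ x ∈ C, l x = l x₀ := by
  have hx₀' : x₀ ∈ affineSpan ℝ C := subset_affineSpan ℝ C hx₀
  have hdir : (affineSpan ℝ C).direction < ⊤ := by
    rw [hC.interior_nonempty_iff_affineSpan_eq_top] at hint
    exact lt_top_iff_ne_top.2 fun h =>
      hint ((AffineSubspace.direction_eq_top_iff_of_nonempty ⟨x₀, hx₀'⟩).1 h)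
  obtain ⟨l, hl, hker⟩ := Submodule.exists_le_ker_of_lt_top _ hdir
  refine ⟨l.toContinuousLinearMap, by simpa using hl, fun x hx => ?_⟩
  have := hker (AffineSubspace.vsub_mem_direction (subset_affineSpan ℝ C hx) hx₀')
  simpa [sub_eq_zero] using this

lemma exists_dual_nonpos_on (hC : Convex ℝ C) (hne : C.Nonempty) (h0 : (0 : E) ∉ C) :
    ∃ l : StrongDual ℝ E, l ≠ 0 ∧ ∀ x ∈ C, l x ≤ 0 := by
  by_cases hint : (interior C).Nonempty
  · exact exists_dual_nonpos_on_of_interior_nonempty hC hint h0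
  · obtain ⟨x₀, hx₀⟩ := hne
    obtain ⟨l, hl, hconst⟩ := exists_dual_eqOn_const_of_interior_eq_empty hC hint hx₀
    rcases le_total (l x₀) 0 with h | h
    · exact ⟨l, hl, fun x hx => (hconst x hx).trans_le h⟩
    · exact ⟨-l, neg_ne_zero.2 hl, fun x hx => by
        simpa only [neg_apply, Left.neg_nonpos_iff, hconst x hx] using h⟩

variable {Ω : Type*} [MeasurableSpace Ω] {μ : Measure Ω} [IsProbabilityMeasure μ] {f : Ω → E}

/- If the barycentre `0` were outside `C`, a functional `l` that is nonpositive on `C` would vanish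
along `f` because its mean does, so `f` would take its values in the hyperplane `ker l`, where the
claim is known. -/
lemma zero_mem_of_integral_eq_zero (hC : Convex ℝ C) (hf : Integrable f μ)
    (hfC : ∀ᵐ x ∂μ, f x ∈ C) (hf0 : ∫ x, f x ∂μ = 0) : (0 : E) ∈ C := by
  induction hd : Module.finrank ℝ E using Nat.strong_induction_on generalizing E C f with
  | _ d ih =>
    by_contra h0
    obtain ⟨l, hl, hlC⟩ := exists_dual_nonpos_on hC (hfC.exists.imp' f fun _ => id) h0
    have hlf : ∀ᵐ x ∂μ, f x ∈ l.ker := by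
      have hmean : ∫ x, -l (f x) ∂μ = 0 := by
        rw [integral_neg, l.integral_comp_comm hf, hf0, map_zero, neg_zero]
      have hzero := (integral_eq_zero_iff_of_nonneg_ae
        (hfC.mono fun x hx => neg_nonneg.2 (hlC _ hx)) (l.integrable_comp hf).neg).1 hmean
      exact hzero.mono fun x hx => neg_eq_zero.1 hx
    obtain ⟨F, hF⟩ := Submodule.exists_isCompl l.ker
    let π : E →L[ℝ] l.ker := (Submodule.projectionOnto _ F hF).toContinuousLinearMap
    have hπ : ∀ x ∈ l.ker, (π x : E) = x := fun x hx =>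
      congrArg Subtype.val (Submodule.projectionOnto_apply_left hF ⟨x, hx⟩)
    have hlt : Module.finrank ℝ l.ker < d :=
      hd ▸ Submodule.finrank_lt fun h => hl (ContinuousLinearMap.ext fun x => by
        simpa using (h ▸ Submodule.mem_top : x ∈ l.ker))
    refine h0 (ih _ hlt (C := l.ker.subtype ⁻¹' C) (f := fun x => π (f x))
      (hC.linear_preimage l.ker.subtype) (π.integrable_comp hf) ?_ ?_ rfl)
    · filter_upwards [hlf, hfC] with x hx hxC
      simpa only [mem_preimage, Submodule.subtype_apply, hπ _ hx] using hxC
    · rw [π.integral_comp_comm hf, hf0, map_zero]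

lemma integral_mem_of_convex (hC : Convex ℝ C) (hf : Integrable f μ) (hfC : ∀ᵐ x ∂μ, f x ∈ C) :
    ∫ x, f x ∂μ ∈ C := by
  have hzero : (0 : E) ∈ (fun x => x + ∫ x, f x ∂μ) ⁻¹' C :=
    zero_mem_of_integral_eq_zero (μ := μ) (f := fun x => f x - ∫ x, f x ∂μ)
      (hC.translate_preimage_left _) (hf.sub (integrable_const _))
      (by simpa only [mem_preimage, sub_add_cancel] using hfC)
      (by simp [integral_sub hf (integrable_const _)])
  simpa only [mem_preimage, zero_add] using hzero

end Convexity

/- Carathéodory with a prescribed number of points: unused indices get weight `0`. -/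
lemma exists_fin_sum_smul_of_mem_convexHull {E : Type*} [AddCommGroup E] [Module ℝ E]
    [FiniteDimensional ℝ E] {m : ℕ} (hm : Module.finrank ℝ E + 1 ≤ m) {S : Set E} {x : E}
    (hx : x ∈ convexHull ℝ S) :
    ∃ (w : Fin m → ℝ) (z : Fin m → E),
      (∀ i, 0 ≤ w i) ∧ ∑ i, w i = 1 ∧ (∀ i, z i ∈ S) ∧ ∑ i, w i • z i = x := by
  obtain ⟨ι, _, z, w, hz, hind, hw, hw1, hwx⟩ := eq_pos_convex_span_of_mem_convexHull hx
  have hcard : Fintype.card ι ≤ m :=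
    (hind.card_le_finrank_succ.trans (by gcongr; exact Submodule.finrank_le _)).trans hm
  obtain ⟨i₀⟩ : Nonempty ι := by
    by_contra h
    rw [not_nonempty_iff] at h
    simp at hw1
  let e : ι ↪ Fin m := (Fintype.equivFin ι).toEmbedding.trans (Fin.castLEEmb hcard)
  have hwe : ∀ i, Function.extend e w 0 (e i) = w i := e.injective.extend_apply _ _
  have hw0 : ∀ j ∉ range e, Function.extend e w 0 j = 0 := fun j hj =>
    Function.extend_apply' _ _ _ hj
  have hze : ∀ i, Function.extend e z (fun _ => z i₀) (e i) = z i := e.injective.extend_apply _ _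
  have hz0 : ∀ j ∉ range e, Function.extend e z (fun _ => z i₀) j = z i₀ := fun j hj =>
    Function.extend_apply' _ _ _ hj
  refine ⟨Function.extend e w 0, Function.extend e z fun _ => z i₀, fun j => ?_, ?_,
    fun j => ?_, ?_⟩
  · by_cases hj : j ∈ range e
    · obtain ⟨i, rfl⟩ := hj
      exact (hw i).le.trans_eq (hwe i).symm
    · exact (hw0 j hj).ge
  · exact hw1 ▸ (Fintype.sum_of_injective e e.injective _ _ hw0 fun i => (hwe i).symm).symm
  · by_cases hj : j ∈ range e
    · obtain ⟨i, rfl⟩ := hj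
      exact hze i ▸ hz ⟨i, rfl⟩
    · rw [hz0 j hj]
      exact hz ⟨i₀, rfl⟩
  · rw [← hwx]
    exact (Fintype.sum_of_injective e e.injective _ _ (fun j hj => by rw [hw0 j hj, zero_smul])
      fun i => by rw [hwe, hze]).symm

lemma KL_eq_klDiv (Q P : Measure X) [IsProbabilityMeasure Q] [IsProbabilityMeasure P] :
    KL Q P = (klDiv Q P : EReal) := by
  have hKL : KL Q P = if Q ≪ P ∧ Integrable (llr Q P) Q
      then ((∫ x, llr Q P x ∂Q : ℝ) : EReal) else ⊤ := rfl
  by_cases h : Q ≪ P ∧ Integrable (llr Q P) Q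
  · rw [hKL, if_pos h, ← toReal_klDiv_of_measure_eq h.1 (by simp),
      EReal.coe_ennreal_toReal (klDiv_ne_top h.1 h.2)]
  · have htop : klDiv Q P = ⊤ := klDiv_eq_top_iff.2 fun hac hint => h ⟨hac, hint⟩
    rw [hKL, if_neg h, htop, EReal.coe_ennreal_top]

section ChainRule

variable {α β : Type*} [MeasurableSpace α] [MeasurableSpace β]
  [MeasurableSpace.CountableOrCountablyGenerated α β] {μ : Measure α}
  {κ η : Kernel α β} [IsFiniteKernel κ] [IsFiniteKernel η]

lemma rnDeriv_compProd_right [IsFiniteMeasure μ] (h : μ ⊗ₘ κ ≪ μ ⊗ₘ η) :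
    (μ ⊗ₘ κ).rnDeriv (μ ⊗ₘ η) =ᵐ[μ ⊗ₘ η] fun p => κ.rnDeriv η p.1 p.2 := by
  have hκ : κ =ᵐ[μ] η.withDensity (κ.rnDeriv η) :=
    h.kernel_of_compProd.mono fun a ha => (Kernel.withDensity_rnDeriv_eq ha).symm
  rw [Measure.compProd_congr hκ, Measure.compProd_withDensity (Kernel.measurable_rnDeriv κ η)]
  exact Measure.rnDeriv_withDensity _ (Kernel.measurable_rnDeriv κ η)

lemma klDiv_kernel_eq_ite (κ η : Kernel α β) [IsFiniteKernel κ] [IsFiniteKernel η] (a : α) :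
    klDiv (κ a) (η a) = if κ a ≪ η a
      then ∫⁻ b, ENNReal.ofReal (klFun (κ.rnDeriv η a b).toReal) ∂η a else ∞ := by
  rw [klDiv_eq_lintegral_klFun]
  congr 1
  refine lintegral_congr_ae ?_
  filter_upwards [Kernel.rnDeriv_eq_rnDeriv_measure (κ := κ) (η := η) (a := a)] with b hb
  rw [hb]

lemma measurable_klDiv_kernel (κ η : Kernel α β) [IsFiniteKernel κ] [IsFiniteKernel η] :
    Measurable fun a => klDiv (κ a) (η a) := by
  simp_rw [klDiv_kernel_eq_ite]
  refine Measurable.ite (Kernel.measurableSet_absolutelyContinuous κ η) ?_ measurable_const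
  exact Measurable.lintegral_kernel_prod_right'
    (f := fun p => ENNReal.ofReal (klFun (κ.rnDeriv η p.1 p.2).toReal)) (by fun_prop)

lemma klDiv_compProd_right [IsFiniteMeasure μ] :
    klDiv (μ ⊗ₘ κ) (μ ⊗ₘ η) = ∫⁻ a, klDiv (κ a) (η a) ∂μ := by
  by_cases h : μ ⊗ₘ κ ≪ μ ⊗ₘ η
  · rw [klDiv_eq_lintegral_klFun_of_ac h]
    calc ∫⁻ p, ENNReal.ofReal (klFun ((μ ⊗ₘ κ).rnDeriv (μ ⊗ₘ η) p).toReal) ∂(μ ⊗ₘ η)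
      _ = ∫⁻ p, ENNReal.ofReal (klFun (κ.rnDeriv η p.1 p.2).toReal) ∂(μ ⊗ₘ η) :=
          lintegral_congr_ae ((rnDeriv_compProd_right h).mono fun p hp => by simp only [hp])
      _ = ∫⁻ a, ∫⁻ b, ENNReal.ofReal (klFun (κ.rnDeriv η a b).toReal) ∂η a ∂μ :=
          Measure.lintegral_compProd (by fun_prop)
      _ = ∫⁻ a, klDiv (κ a) (η a) ∂μ :=
          lintegral_congr_ae (h.kernel_of_compProd.mono fun a ha => by
            simp only [klDiv_kernel_eq_ite, if_pos ha])
  · rw [klDiv_of_not_ac h, eq_comm]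
    by_contra hfin
    refine h (Measure.AbsolutelyContinuous.compProd_right ?_)
    filter_upwards [ae_lt_top (measurable_klDiv_kernel κ η) hfin] with a ha
    exact (klDiv_ne_top_iff.1 ha.ne).1

end ChainRule

section Products

variable {Z W : Type*} [MeasurableSpace Z] [MeasurableSpace W]

lemma klDiv_compProd_prod [MeasurableSpace.CountableOrCountablyGenerated Z W]
    (μ : Measure Z) [IsFiniteMeasure μ] (κ : Kernel Z W) [IsFiniteKernel κ] (ν : Measure W)
    [IsFiniteMeasure ν] :
    klDiv (μ ⊗ₘ κ) (μ.prod ν) = ∫⁻ z, klDiv (κ z) ν ∂μ := by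
  rw [← Measure.compProd_const, klDiv_compProd_right]
  simp only [Kernel.const_apply]

variable [StandardBorelSpace W] [Nonempty W]

lemma klDiv_prod_eq_add_klDiv (Q : Measure (Z × W)) [IsFiniteMeasure Q] (μ : Measure Z)
    [IsFiniteMeasure μ] (ν : Measure W) [IsProbabilityMeasure ν] :
    klDiv Q (μ.prod ν) = klDiv Q.fst μ + klDiv Q (Q.fst.prod ν) := by
  have h := klDiv_compProd_eq_add Q.fst μ Q.condKernel (Kernel.const Z ν)
  rwa [Q.disintegrate, Measure.compProd_const, Measure.compProd_const] at h

lemma klDiv_prod_eq_add_lintegral (Q : Measure (Z × W)) [IsFiniteMeasure Q] (μ : Measure Z)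
    [IsFiniteMeasure μ] (ν : Measure W) [IsProbabilityMeasure ν] :
    klDiv Q (μ.prod ν) = klDiv Q.fst μ + ∫⁻ z, klDiv (Q.condKernel z) ν ∂Q.fst := by
  rw [klDiv_prod_eq_add_klDiv, ← klDiv_compProd_prod, Q.disintegrate]

/- By the chain rule on the image, only its conditional part has to be compared; there the data
processing inequality forgets that `π₁ z` carries less information than `z`. -/
lemma klDiv_map_prodMap_le {Z' W' : Type*} [MeasurableSpace Z'] [MeasurableSpace W']
    [StandardBorelSpace W'] [Nonempty W'] (Q : Measure (Z × W)) [IsProbabilityMeasure Q]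
    (ν₁ : Measure Z') [IsFiniteMeasure ν₁] (ν₂ : Measure W') [IsProbabilityMeasure ν₂]
    {π₁ : Z → Z'} (hπ₁ : Measurable π₁) {π₂ : W → W'} (hπ₂ : Measurable π₂) :
    klDiv (Q.map (Prod.map π₁ π₂)) (ν₁.prod ν₂) ≤
      klDiv (Q.fst.map π₁) ν₁ + ∫⁻ z, klDiv ((Q.condKernel z).map π₂) ν₂ ∂Q.fst := by
  have hmap : Q.map (Prod.map π₁ π₂) =
      (Q.fst ⊗ₘ Q.condKernel.map π₂).map (Prod.map π₁ id) := by
    rw [Measure.compProd_map hπ₂, Q.disintegrate, Measure.map_map (by fun_prop) (by fun_prop)]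
    rfl
  have hfst : (Q.map (Prod.map π₁ π₂)).fst = Q.fst.map π₁ := by
    rw [Measure.fst, Measure.fst, Measure.map_map (by fun_prop) (by fun_prop),
      Measure.map_map (by fun_prop) (by fun_prop)]
    rfl
  have hprod : (Q.fst.map π₁).prod ν₂ = (Q.fst.prod ν₂).map (Prod.map π₁ id) := by
    rw [← Measure.map_prod_map _ _ hπ₁ measurable_id, Measure.map_id]
  have := Measure.isProbabilityMeasure_map (μ := Q) (hπ₁.prodMap hπ₂).aemeasurable
  calc klDiv (Q.map (Prod.map π₁ π₂)) (ν₁.prod ν₂)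
    _ = klDiv (Q.fst.map π₁) ν₁ + klDiv ((Q.fst ⊗ₘ Q.condKernel.map π₂).map (Prod.map π₁ id))
          ((Q.fst.prod ν₂).map (Prod.map π₁ id)) := by
        rw [klDiv_prod_eq_add_klDiv, hfst, hprod, hmap]
    _ ≤ klDiv (Q.fst.map π₁) ν₁ + klDiv (Q.fst ⊗ₘ Q.condKernel.map π₂) (Q.fst.prod ν₂) := by
        gcongr
        exact klDiv_map_le _ _ (hπ₁.prodMap measurable_id)
    _ = klDiv (Q.fst.map π₁) ν₁ + ∫⁻ z, klDiv ((Q.condKernel z).map π₂) ν₂ ∂Q.fst := by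
        rw [klDiv_compProd_prod]
        simp only [Kernel.map_apply _ hπ₂]

end Products

instance (P : Measure (X × Y)) [IsProbabilityMeasure P] : IsProbabilityMeasure (m1 P) :=
  Measure.isProbabilityMeasure_map measurable_fst.aemeasurable

instance (P : Measure (X × Y)) [IsProbabilityMeasure P] : IsProbabilityMeasure (m2 P) :=
  Measure.isProbabilityMeasure_map measurable_snd.aemeasurable

instance (n : ℕ) (P : Measure X) [IsProbabilityMeasure P] : IsProbabilityMeasure (piM n P) :=
  inferInstanceAs (IsProbabilityMeasure (Measure.pi fun _ => P))

@[fun_prop]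
lemma measurable_fstv {n : ℕ} : Measurable (fstv : (Fin n → X × Y) → Fin n → X) := by
  unfold fstv
  fun_prop

@[fun_prop]
lemma measurable_sndv {n : ℕ} : Measurable (sndv : (Fin n → X × Y) → Fin n → Y) := by
  unfold sndv
  fun_prop

section SingleLetter

/-- The divergences of a joint law `Q` and of its two marginals from `P` and its marginals, as real
numbers (meaningful only when `klDiv Q P ≠ ∞`). -/
def divergenceTriple (P Q : Measure (X × Y)) : ℝ × ℝ × ℝ :=
  ((klDiv (m1 Q) (m1 P)).toReal, (klDiv (m2 Q) (m2 P)).toReal, (klDiv Q P).toReal)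

/-- The convex hull of the divergence triples of laws at finite divergence from `P`: the convex
region whose lower boundary is `Θ̲`. -/
def divergenceRegion (P : Measure (X × Y)) : Set (ℝ × ℝ × ℝ) :=
  convexHull ℝ (divergenceTriple P '' {Q | IsProbabilityMeasure Q ∧ klDiv Q P ≠ ∞})

variable {P : Measure (X × Y)}

lemma divergenceTriple_mem_divergenceRegion {Q : Measure (X × Y)} [hQ : IsProbabilityMeasure Q]
    (h : klDiv Q P ≠ ∞) : divergenceTriple P Q ∈ divergenceRegion P :=
  subset_convexHull ℝ _ (mem_image_of_mem _ ⟨hQ, h⟩)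

lemma nonneg_of_mem_divergenceRegion {x : ℝ × ℝ × ℝ} (hx : x ∈ divergenceRegion P) : 0 ≤ x := by
  refine convexHull_min ?_ (convex_Ici 0) hx
  rintro _ ⟨Q, -, rfl⟩
  exact ⟨ENNReal.toReal_nonneg, ENNReal.toReal_nonneg, ENNReal.toReal_nonneg⟩

variable [IsProbabilityMeasure P]

lemma klDiv_m1_le (Q : Measure (X × Y)) [IsProbabilityMeasure Q] :
    klDiv (m1 Q) (m1 P) ≤ klDiv Q P := klDiv_map_le _ _ measurable_fst

lemma klDiv_m2_le (Q : Measure (X × Y)) [IsProbabilityMeasure Q] :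
    klDiv (m2 Q) (m2 P) ≤ klDiv Q P := klDiv_map_le _ _ measurable_snd

lemma phiL_divergenceTriple_le {Q : Measure (X × Y)} [hQ : IsProbabilityMeasure Q]
    (h : klDiv Q P ≠ ∞) :
    phiL P (divergenceTriple P Q).1 (divergenceTriple P Q).2.1 ≤ (divergenceTriple P Q).2.2 := by
  have hX : klDiv (m1 Q) (m1 P) ≠ ∞ := ne_top_of_le_ne_top h (klDiv_m1_le Q)
  have hY : klDiv (m2 Q) (m2 P) ≠ ∞ := ne_top_of_le_ne_top h (klDiv_m2_le Q)
  calc phiL P (divergenceTriple P Q).1 (divergenceTriple P Q).2.1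
    _ ≤ Dmin (m1 Q) (m2 Q) P :=
        iInf_le_of_le (m1 Q) <| iInf_le_of_le (m2 Q) <| iInf_le_of_le inferInstance <|
          iInf_le_of_le inferInstance <| iInf_le_of_le (klDiv_ne_top_iff.1 hX).1 <|
          iInf_le_of_le (klDiv_ne_top_iff.1 hY).1 <|
          iInf_le_of_le ((KL_eq_klDiv _ _).trans (EReal.coe_ennreal_toReal hX).symm) <|
          iInf_le_of_le ((KL_eq_klDiv _ _).trans (EReal.coe_ennreal_toReal hY).symm) le_rfl
    _ ≤ KL Q P := iInf₂_le Q ⟨hQ, rfl, rfl⟩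
    _ = (divergenceTriple P Q).2.2 :=
        (KL_eq_klDiv _ _).trans (EReal.coe_ennreal_toReal h).symm

lemma ThetaL_ne_bot {α β : ℝ} : ThetaL P α β ≠ ⊥ := by
  have hphi : ∀ s t, 0 ≤ phiL P s t := fun s t => by
    simp only [phiL, Dmin, le_iInf_iff]
    rintro - - - - - - - - Q ⟨_, -⟩
    rw [KL_eq_klDiv]
    exact EReal.coe_ennreal_nonneg _
  have hlce : ∀ s t, 0 ≤ lce2 (phiL P) s t := fun s t => by
    simp only [lce2, le_iInf_iff]
    intro w x hw _ _ _ _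
    exact Finset.sum_nonneg fun i _ => mul_nonneg (EReal.coe_nonneg.2 (hw i)) (hphi _ _)
  have hTheta : 0 ≤ ThetaL P α β := by
    simp only [ThetaL, le_iInf_iff]
    exact fun s t _ _ => hlce s t
  exact ne_bot_of_le_ne_bot EReal.zero_ne_bot hTheta

lemma lce2_le_of_mem_convexHull {F : ℝ → ℝ → EReal} {S : Set (ℝ × ℝ × ℝ)}
    (hS : ∀ x ∈ S, 0 ≤ x.1 ∧ 0 ≤ x.2.1 ∧ F x.1 x.2.1 ≤ x.2.2) {x : ℝ × ℝ × ℝ}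
    (hx : x ∈ convexHull ℝ S) : lce2 F x.1 x.2.1 ≤ x.2.2 := by
  obtain ⟨w, z, hw, hw1, hz, rfl⟩ :=
    exists_fin_sum_smul_of_mem_convexHull (m := 4) (by simp) hx
  calc lce2 F (∑ i, w i • z i).1 (∑ i, w i • z i).2.1
    _ ≤ ∑ i, (w i : EReal) * F (z i).1 (z i).2.1 :=
        iInf_le_of_le w <| iInf_le_of_le (fun i => ((z i).1, (z i).2.1)) <| iInf_le_of_le hw <|
          iInf_le_of_le hw1 <| iInf_le_of_le (fun i => ⟨(hS _ (hz i)).1, (hS _ (hz i)).2.1⟩) <|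
          iInf_le_of_le (by simp [Prod.fst_sum]) <|
          iInf_le_of_le (by simp [Prod.fst_sum, Prod.snd_sum]) le_rfl
    _ ≤ ∑ i, ((w i * (z i).2.2 : ℝ) : EReal) := Finset.sum_le_sum fun i _ => by
        rw [EReal.coe_mul]
        exact mul_le_mul_of_nonneg_left (hS _ (hz i)).2.2 (mod_cast hw i)
    _ = (∑ i, w i • z i).2.2 := by
        simp [Fin.sum_univ_four]

lemma ThetaL_le_of_mem_divergenceRegion {x : ℝ × ℝ × ℝ} (hx : x ∈ divergenceRegion P) :
    ThetaL P x.1 x.2.1 ≤ x.2.2 := by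
  refine iInf_le_of_le x.1 <| iInf_le_of_le x.2.1 <| iInf_le_of_le le_rfl <|
    iInf_le_of_le le_rfl <| lce2_le_of_mem_convexHull ?_ hx
  rintro _ ⟨Q, ⟨_, hQ⟩, rfl⟩
  exact ⟨ENNReal.toReal_nonneg, ENNReal.toReal_nonneg, phiL_divergenceTriple_le hQ⟩

/- The average of the triples of a finite-divergence family of laws lies in the region because
a convex set in finite dimension, closed or not, contains the barycentres of its probabilities. -/
lemma exists_mem_divergenceRegion_lintegral {Z : Type*} [MeasurableSpace Z] {ρ : Measure Z}
    [IsProbabilityMeasure ρ] {κ : Kernel Z (X × Y)} [IsMarkovKernel κ]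
    [StandardBorelSpace X] [StandardBorelSpace Y]
    (h : ∫⁻ z, klDiv (κ z) P ∂ρ ≠ ∞) :
    ∃ x ∈ divergenceRegion P, ∫⁻ z, klDiv (m1 (κ z)) (m1 P) ∂ρ = ENNReal.ofReal x.1 ∧
      ∫⁻ z, klDiv (m2 (κ z)) (m2 P) ∂ρ = ENNReal.ofReal x.2.1 ∧
      ∫⁻ z, klDiv (κ z) P ∂ρ = ENNReal.ofReal x.2.2 := by
  have hmeas : Measurable fun z => klDiv (κ z) P :=
    measurable_klDiv_kernel κ (Kernel.const Z P)
  have hmeas₁ : Measurable fun z => klDiv (m1 (κ z)) (m1 P) := by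
    simpa only [Kernel.map_apply _ measurable_fst] using!
      measurable_klDiv_kernel (κ.map Prod.fst) (Kernel.const Z (m1 P))
  have hmeas₂ : Measurable fun z => klDiv (m2 (κ z)) (m2 P) := by
    simpa only [Kernel.map_apply _ measurable_snd] using!
      measurable_klDiv_kernel (κ.map Prod.snd) (Kernel.const Z (m2 P))
  have h₁ : ∫⁻ z, klDiv (m1 (κ z)) (m1 P) ∂ρ ≠ ∞ :=
    ne_top_of_le_ne_top h (lintegral_mono fun z => klDiv_m1_le (κ z))
  have h₂ : ∫⁻ z, klDiv (m2 (κ z)) (m2 P) ∂ρ ≠ ∞ :=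
    ne_top_of_le_ne_top h (lintegral_mono fun z => klDiv_m2_le (κ z))
  have hofReal : ∀ {F : Z → ℝ≥0∞}, Measurable F → ∫⁻ z, F z ∂ρ ≠ ∞ →
      ∫⁻ z, F z ∂ρ = ENNReal.ofReal (∫ z, (F z).toReal ∂ρ) := fun hF hfin => by
    rw [integral_toReal hF.aemeasurable (ae_lt_top hF hfin), ENNReal.ofReal_toReal hfin]
  have hint₁ := integrable_toReal_of_lintegral_ne_top hmeas₁.aemeasurable h₁
  have hint₂ := integrable_toReal_of_lintegral_ne_top hmeas₂.aemeasurable h₂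
  have hint := integrable_toReal_of_lintegral_ne_top hmeas.aemeasurable h
  refine ⟨_, integral_mem_of_convex (convex_convexHull ℝ _) (hint₁.prodMk (hint₂.prodMk hint))
    ((ae_lt_top hmeas h).mono fun z hz => divergenceTriple_mem_divergenceRegion hz.ne), ?_⟩
  rw [integral_pair hint₁ (hint₂.prodMk hint), integral_pair hint₂ hint]
  exact ⟨hofReal hmeas₁ h₁, hofReal hmeas₂ h₂, hofReal hmeas h⟩

end SingleLetter

section Tensorization

variable {A B : Type*} [MeasurableSpace A] [MeasurableSpace B]

lemma klDiv_map_measurableEquiv (Q μ : Measure A) [IsFiniteMeasure Q] [IsFiniteMeasure μ]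
    (e : A ≃ᵐ B) : klDiv (Q.map e) (μ.map e) = klDiv Q μ := by
  refine (klDiv_map_le Q μ e.measurable).antisymm ?_
  simpa only [MeasurableEquiv.map_symm_map] using
    klDiv_map_le (Q.map e) (μ.map e) e.symm.measurable

/-- A vector of length `n + 1` as the pair of its last `n` coordinates and its first one. -/
def tailHead (n : ℕ) (A : Type*) [MeasurableSpace A] : (Fin (n + 1) → A) ≃ᵐ (Fin n → A) × A :=
  (MeasurableEquiv.piFinSuccAbove (fun _ => A) 0).trans MeasurableEquiv.prodComm

lemma map_tailHead_piM (n : ℕ) (μ : Measure A) [SigmaFinite μ] :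
    (piM (n + 1) μ).map (tailHead n A) = (piM n μ).prod μ :=
  (Measure.measurePreserving_swap.comp (measurePreserving_piFinSuccAbove (fun _ => μ) 0)).map_eq

lemma klDiv_map_piM_succ {n : ℕ} (Q : Measure (Fin (n + 1) → A)) [IsProbabilityMeasure Q]
    (ν : Measure B) [IsProbabilityMeasure ν] {π : A → B} (hπ : Measurable π) :
    klDiv (Q.map fun z i => π (z i)) (piM (n + 1) ν) =
      klDiv ((Q.map (tailHead n A)).map (Prod.map (fun z i => π (z i)) π))
        ((piM n ν).prod ν) := by
  have hmeas : ∀ m, Measurable fun (z : Fin m → A) i => π (z i) := fun m => by fun_prop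
  have hcomm : tailHead n B ∘ (fun z i => π (z i)) =
      Prod.map (fun z i => π (z i)) π ∘ tailHead n A := rfl
  rw [← klDiv_map_measurableEquiv _ _ (tailHead n B), map_tailHead_piM,
    Measure.map_map (tailHead n B).measurable (hmeas _), hcomm,
    Measure.map_map ((hmeas n).prodMap hπ) (tailHead n A).measurable]

variable [StandardBorelSpace X] [StandardBorelSpace Y] {P : Measure (X × Y)}
  [IsProbabilityMeasure P]

lemma exists_mem_divergenceRegion_prod {Z Z₁ Z₂ : Type*} [MeasurableSpace Z] [MeasurableSpace Z₁]
    [MeasurableSpace Z₂] {Q : Measure (Z × (X × Y))} [IsProbabilityMeasure Q] {μ : Measure Z}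
    [IsFiniteMeasure μ] (ν₁ : Measure Z₁) [IsFiniteMeasure ν₁] (ν₂ : Measure Z₂)
    [IsFiniteMeasure ν₂] {π₁ : Z → Z₁} (hπ₁ : Measurable π₁) {π₂ : Z → Z₂} (hπ₂ : Measurable π₂)
    (h : klDiv Q (μ.prod P) ≠ ∞) :
    ∃ x ∈ divergenceRegion P,
      klDiv (Q.map (Prod.map π₁ Prod.fst)) (ν₁.prod (m1 P)) ≤
        klDiv (Q.fst.map π₁) ν₁ + ENNReal.ofReal x.1 ∧
      klDiv (Q.map (Prod.map π₂ Prod.snd)) (ν₂.prod (m2 P)) ≤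
        klDiv (Q.fst.map π₂) ν₂ + ENNReal.ofReal x.2.1 ∧
      klDiv Q (μ.prod P) = klDiv Q.fst μ + ENNReal.ofReal x.2.2 := by
  obtain ⟨x₀, y₀⟩ : Nonempty (X × Y) := nonempty_of_isProbabilityMeasure P
  have : Nonempty X := ⟨x₀⟩
  have : Nonempty Y := ⟨y₀⟩
  have hchain := klDiv_prod_eq_add_lintegral Q μ P
  obtain ⟨x, hx, h₁, h₂, h₃⟩ := exists_mem_divergenceRegion_lintegral
    (ne_top_of_le_ne_top h (hchain ▸ le_add_self))
  exact ⟨x, hx, h₁ ▸ klDiv_map_prodMap_le Q ν₁ (m1 P) hπ₁ measurable_fst,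
    h₂ ▸ klDiv_map_prodMap_le Q ν₂ (m2 P) hπ₂ measurable_snd, h₃ ▸ hchain⟩

lemma exists_succ_smul_eq_of_convex {E : Type*} [AddCommGroup E] [Module ℝ E] {C : Set E}
    (hC : Convex ℝ C) {x y : E} (hx : x ∈ C) (hy : y ∈ C) (n : ℕ) :
    ∃ z ∈ C, ((n + 1 : ℕ) : ℝ) • z = (n : ℝ) • x + y := by
  refine ⟨(n / (n + 1 : ℝ)) • x + (1 / (n + 1 : ℝ)) • y,
    hC hx hy (by positivity) (by positivity) (by field_simp), ?_⟩
  rw [smul_add, smul_smul, smul_smul, Nat.cast_add_one, mul_div_cancel₀ _ (by positivity),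
    mul_one_div_cancel (by positivity), one_smul]

lemma klDiv_eq_zero_of_subsingleton [Subsingleton A] (Q μ : Measure A) [IsProbabilityMeasure Q]
    [IsProbabilityMeasure μ] : klDiv Q μ = 0 := by
  suffices Q = μ by rw [this, klDiv_self]
  ext s -
  induction s using Subsingleton.set_cases <;> simp

/-- `x` is a single-letter bound for the law `Q` on `(X × Y)ⁿ`: the divergence of `Q` from `P^{⊗n}`
is `n` times the last coordinate of `x`, while those of its marginals are at most `n` times the
first two. -/
def IsSingleLetterBound (P : Measure (X × Y)) (n : ℕ) (Q : Measure (Fin n → X × Y))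
    (x : ℝ × ℝ × ℝ) : Prop :=
  klDiv (Q.map fstv) (piM n (m1 P)) ≤ ENNReal.ofReal (n * x.1) ∧
    klDiv (Q.map sndv) (piM n (m2 P)) ≤ ENNReal.ofReal (n * x.2.1) ∧
    klDiv Q (piM n P) = ENNReal.ofReal (n * x.2.2)

lemma exists_mem_divergenceRegion_piM (n : ℕ) {Q : Measure (Fin n → X × Y)}
    [IsProbabilityMeasure Q] (h : klDiv Q (piM n P) ≠ ∞) :
    ∃ x ∈ divergenceRegion P, IsSingleLetterBound P n Q x := by
  induction n with
  | zero =>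
    have hfst := Measure.isProbabilityMeasure_map (μ := Q) measurable_fstv.aemeasurable
    have hsnd := Measure.isProbabilityMeasure_map (μ := Q) measurable_sndv.aemeasurable
    refine ⟨_, divergenceTriple_mem_divergenceRegion (Q := P) (by simp), ?_⟩
    simp [IsSingleLetterBound, klDiv_eq_zero_of_subsingleton]
  | succ n ih =>
    have hQ' := Measure.isProbabilityMeasure_map (μ := Q) (tailHead n _).measurable.aemeasurable
    set Q' := Q.map (tailHead n (X × Y)) with hQ'_def
    have hdiv : klDiv Q (piM (n + 1) P) = klDiv Q' ((piM n P).prod P) := by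
      rw [hQ'_def, ← map_tailHead_piM, klDiv_map_measurableEquiv]
    obtain ⟨y, hy, hy₁, hy₂, hy₃⟩ := exists_mem_divergenceRegion_prod (piM n (m1 P))
      (piM n (m2 P)) measurable_fstv measurable_sndv (hdiv ▸ h)
    obtain ⟨x, hx, hx₁, hx₂, hx₃⟩ := ih (Q := Q'.fst)
      (ne_top_of_le_ne_top h (hdiv ▸ hy₃ ▸ le_self_add))
    have hx0 := nonneg_of_mem_divergenceRegion hx
    have hy0 := nonneg_of_mem_divergenceRegion hy
    obtain ⟨z, hz, hzxy⟩ := exists_succ_smul_eq_of_convex (convex_convexHull ℝ _) hx hy n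
    have hz₁ : ↑(n + 1) * z.1 = n * x.1 + y.1 := congrArg (·.1) hzxy
    have hz₂ : ↑(n + 1) * z.2.1 = n * x.2.1 + y.2.1 := congrArg (·.2.1) hzxy
    have hz₃ : ↑(n + 1) * z.2.2 = n * x.2.2 + y.2.2 := congrArg (·.2.2) hzxy
    refine ⟨z, hz, ?_, ?_, ?_⟩
    · rw [hz₁, ENNReal.ofReal_add (mul_nonneg n.cast_nonneg hx0.1) hy0.1]
      exact (klDiv_map_piM_succ Q (m1 P) measurable_fst).trans_le <|
        hy₁.trans (by gcongr)
    · rw [hz₂, ENNReal.ofReal_add (mul_nonneg n.cast_nonneg hx0.2.1) hy0.2.1]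
      exact (klDiv_map_piM_succ Q (m2 P) measurable_snd).trans_le <|
        hy₂.trans (by gcongr)
    · rw [hz₃, ENNReal.ofReal_add (mul_nonneg n.cast_nonneg hx0.2.2) hy0.2.2, ← hx₃, hdiv, hy₃]

end Tensorization

section Gibbs

variable {T : Type*} [MeasurableSpace T] {Q ν : Measure T}

lemma lintegral_mul_rnDeriv_le {F : T → ℝ≥0∞} (hF : Measurable F) :
    ∫⁻ x, F x * ν.rnDeriv Q x ∂Q ≤ ∫⁻ x, F x ∂ν :=
  calc ∫⁻ x, F x * ν.rnDeriv Q x ∂Q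
    _ = ∫⁻ x, F x ∂Q.withDensity (ν.rnDeriv Q) := by
        rw [lintegral_withDensity_eq_lintegral_mul _ (Measure.measurable_rnDeriv ν Q) hF]
        simp only [Pi.mul_apply, mul_comm]
    _ ≤ ∫⁻ x, F x ∂ν := lintegral_mono' (Measure.withDensity_rnDeriv_le ν Q) le_rfl

lemma log_sub_llr_sub_log_le [SigmaFinite Q] [SigmaFinite ν] (hac : Q ≪ ν) {F : T → ℝ}
    (hpos : ∀ᵐ x ∂Q, 0 < F x) {J : ℝ} (hJ : 0 < J) :
    ∀ᵐ x ∂Q, Real.log (F x) - llr Q ν x - Real.log J ≤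
      (ENNReal.ofReal (F x) * ν.rnDeriv Q x).toReal / J - 1 := by
  filter_upwards [hpos, exp_neg_llr hac] with x hx hexp
  rw [ENNReal.toReal_mul, ENNReal.toReal_ofReal hx.le, ← hexp]
  refine le_of_eq_of_le ?_ (Real.log_le_sub_one_of_pos (by positivity))
  rw [Real.log_div (by positivity) hJ.ne', Real.log_mul hx.ne' (Real.exp_pos _).ne', Real.log_exp,
    sub_eq_add_neg (Real.log (F x))]

/- Gibbs' variational inequality: integrate `log y ≤ y - 1` at `y = F (dν/dQ) / ∫ F dν`. -/
lemma integral_log_le_klDiv_add_log_lintegral [IsProbabilityMeasure Q] [IsProbabilityMeasure ν]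
    {F : T → ℝ} (hF : Measurable F) (hpos : ∀ᵐ x ∂Q, 0 < F x)
    (hlog : Integrable (fun x => Real.log (F x)) Q)
    (hfin : ∫⁻ x, ENNReal.ofReal (F x) ∂ν ≠ ∞) (hQ : klDiv Q ν ≠ ∞) :
    ∫ x, Real.log (F x) ∂Q ≤
      (klDiv Q ν).toReal + Real.log (∫⁻ x, ENNReal.ofReal (F x) ∂ν).toReal := by
  obtain ⟨hac, hllr⟩ := klDiv_ne_top_iff.1 hQ
  set J := (∫⁻ x, ENNReal.ofReal (F x) ∂ν).toReal
  have hJ : 0 < J := by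
    refine ENNReal.toReal_pos (fun h0 => ?_) hfin
    rw [lintegral_eq_zero_iff hF.ennreal_ofReal] at h0
    obtain ⟨x, hx, hx0⟩ := (hpos.and (hac.ae_le h0)).exists
    exact hx.not_ge (ENNReal.ofReal_eq_zero.1 hx0)
  set G : T → ℝ≥0∞ := fun x => ENNReal.ofReal (F x) * ν.rnDeriv Q x
  have hGm : AEMeasurable G Q := by fun_prop
  have hGle : ∫⁻ x, G x ∂Q ≤ ∫⁻ x, ENNReal.ofReal (F x) ∂ν :=
    lintegral_mul_rnDeriv_le hF.ennreal_ofReal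
  have hGfin : ∫⁻ x, G x ∂Q ≠ ∞ := ne_top_of_le_ne_top hfin hGle
  have hGint := integrable_toReal_of_lintegral_ne_top hGm hGfin
  have hGJ : (∫ x, (G x).toReal ∂Q) / J ≤ 1 := by
    rw [div_le_one hJ, integral_toReal hGm (ae_lt_top' hGm hGfin)]
    exact ENNReal.toReal_mono hfin hGle
  have hdiff : Integrable (fun x => Real.log (F x) - llr Q ν x) Q := hlog.sub hllr
  have key : ∫ x, (Real.log (F x) - llr Q ν x - Real.log J) ∂Q ≤
      ∫ x, ((G x).toReal / J - 1) ∂Q :=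
    integral_mono_ae (hdiff.sub (integrable_const _))
      ((hGint.div_const J).sub (integrable_const 1)) (log_sub_llr_sub_log_le hac hpos hJ)
  rw [integral_sub hdiff (integrable_const _), integral_sub hlog hllr,
    integral_sub (hGint.div_const J) (integrable_const 1), integral_div, integral_const,
    integral_const, ← toReal_klDiv_of_measure_eq hac (by simp)] at key
  simp only [probReal_univ, one_smul] at key
  linarith

end Gibbs

section Norms

variable {T : Type*} [MeasurableSpace T] {Q ν : Measure T} {f : T → ℝ} {r : ℝ}

lemma elog_of_ne {x : ℝ≥0∞} (h0 : x ≠ 0) (htop : x ≠ ∞) : elog x = (Real.log x.toReal : ℝ) := by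
  rw [elog, if_neg h0, if_neg htop]

lemma lintegral_rpow_ne_zero (hf : Adm ν f) (hr : 0 < r) :
    ∫⁻ x, ENNReal.ofReal (f x) ^ r ∂ν ≠ 0 := fun h => by
  rw [lintegral_eq_zero_iff (hf.1.ennreal_ofReal.pow_const r)] at h
  refine hf.2.2 (h.mono fun x hx => ?_)
  exact le_antisymm (ENNReal.ofReal_eq_zero.1 ((ENNReal.rpow_eq_zero_iff_of_pos hr).1 hx))
    (hf.2.1 x)

lemma rnorm_ne_zero (hf : Adm ν f) (hr : 0 < r) : rnorm ν f r ≠ 0 := fun h =>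
  lintegral_rpow_ne_zero hf hr ((ENNReal.rpow_eq_zero_iff_of_pos (one_div_pos.2 hr)).1 h)

lemma rnorm_ne_top_iff (hr : 0 < r) :
    rnorm ν f r ≠ ∞ ↔ ∫⁻ x, ENNReal.ofReal (f x) ^ r ∂ν ≠ ∞ :=
  (ENNReal.rpow_eq_top_iff_of_pos (one_div_pos.2 hr)).not

lemma elog_rnorm (hf : Adm ν f) (hr : 0 < r) (hfin : rnorm ν f r ≠ ∞) :
    elog (rnorm ν f r) = (Real.log (rnorm ν f r).toReal : ℝ) :=
  elog_of_ne (rnorm_ne_zero hf hr) hfin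

lemma log_lintegral_rpow (hf : Adm ν f) (hr : 0 < r) (hfin : rnorm ν f r ≠ ∞) :
    Real.log (∫⁻ x, ENNReal.ofReal (f x) ^ r ∂ν).toReal =
      r * Real.log (rnorm ν f r).toReal := by
  have hI := ENNReal.toReal_pos (lintegral_rpow_ne_zero hf hr) ((rnorm_ne_top_iff hr).1 hfin)
  rw [rnorm, enorm, ← ENNReal.toReal_rpow, Real.log_rpow hI]
  field_simp

lemma ae_ofReal_le_rnormInf : ∀ᵐ x ∂ν, ENNReal.ofReal (f x) ≤ rnormInf ν f :=
  ENNReal.ae_le_essSup _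

lemma rnormInf_ne_zero (hf : Adm ν f) : rnormInf ν f ≠ 0 := fun h =>
  hf.2.2 <| ae_ofReal_le_rnormInf.mono fun x hx => le_antisymm
    (ENNReal.ofReal_eq_zero.1 (nonpos_iff_eq_zero.1 (hx.trans_eq h))) (hf.2.1 x)

variable [IsProbabilityMeasure Q]

lemma integral_log_le_log_rnormInf (hac : Q ≪ ν) (hpos : ∀ᵐ x ∂Q, 0 < f x)
    (hlog : Integrable (fun x => Real.log (f x)) Q) (hfin : rnormInf ν f ≠ ∞) :
    ∫ x, Real.log (f x) ∂Q ≤ Real.log (rnormInf ν f).toReal := by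
  have hle : ∀ᵐ x ∂Q, Real.log (f x) ≤ Real.log (rnormInf ν f).toReal := by
    filter_upwards [hpos, hac.ae_le ae_ofReal_le_rnormInf] with x hx hxN
    exact Real.log_le_log hx ((ENNReal.ofReal_le_iff_le_toReal hfin).1 hxN)
  simpa using integral_mono_ae hlog (integrable_const _) hle

variable [IsProbabilityMeasure ν]

lemma integral_log_le_klDiv_div_add_log_rnorm (hf : Adm ν f) (hpos : ∀ᵐ x ∂Q, 0 < f x)
    (hlog : Integrable (fun x => Real.log (f x)) Q) (hQ : klDiv Q ν ≠ ∞) (hr : 0 < r)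
    (hfin : rnorm ν f r ≠ ∞) :
    ∫ x, Real.log (f x) ∂Q ≤ (klDiv Q ν).toReal / r + Real.log (rnorm ν f r).toReal := by
  have hlogr : (fun x => Real.log (f x ^ r)) =ᵐ[Q] fun x => r * Real.log (f x) :=
    hpos.mono fun x hx => Real.log_rpow hx r
  have hofReal : ∀ x, ENNReal.ofReal (f x ^ r) = ENNReal.ofReal (f x) ^ r := fun x =>
    (ENNReal.ofReal_rpow_of_nonneg (hf.2.1 x) hr.le).symm
  have key := integral_log_le_klDiv_add_log_lintegral (F := fun x => f x ^ r)
    (hf.1.pow_const r) (hpos.mono fun x hx => Real.rpow_pos_of_pos hx r)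
    ((hlog.const_mul r).congr hlogr.symm)
    (by simpa only [hofReal] using (rnorm_ne_top_iff hr).1 hfin) hQ
  simp only [hofReal] at key
  rw [integral_congr_ae hlogr, integral_const_mul, log_lintegral_rpow hf hr hfin] at key
  calc ∫ x, Real.log (f x) ∂Q
    _ = r * (∫ x, Real.log (f x) ∂Q) / r := by field_simp
    _ ≤ ((klDiv Q ν).toReal + r * Real.log (rnorm ν f r).toReal) / r := by gcongr
    _ = (klDiv Q ν).toReal / r + Real.log (rnorm ν f r).toReal := by field_simp

lemma neg_log_measure_le_klDiv {s : Set T} (hs : MeasurableSet s) (hQs : ∀ᵐ x ∂Q, x ∈ s)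
    (hQ : klDiv Q ν ≠ ∞) : -Real.log (ν s).toReal ≤ (klDiv Q ν).toReal := by
  have hlog : ∀ x, Real.log (s.indicator 1 x) = 0 := fun x => by
    by_cases hx : x ∈ s <;> simp [hx]
  have hofReal : ∀ x, ENNReal.ofReal (s.indicator 1 x) = s.indicator 1 x := fun x => by
    by_cases hx : x ∈ s <;> simp [hx]
  have key := integral_log_le_klDiv_add_log_lintegral (F := s.indicator (1 : T → ℝ))
    (measurable_one.indicator hs) (hQs.mono fun x hx => by simp [hx]) (by simp [hlog])
    (by simp [hofReal, lintegral_indicator_one hs]) hQ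
  simp only [hlog, hofReal, integral_zero, lintegral_indicator_one hs] at key
  linarith

end Norms

section Entropy

variable {T : Type*} [MeasurableSpace T] {Q ν : Measure T} {f : T → ℝ} {p A : ℝ} {ps : ℝ≥0∞}

/-- The hypothesis of the Brascamp–Lieb inequality on one of the two functions: `Ent_{p,p*}(f)` is
at least `A` if `p ≥ p*` and at most `A` if `p ≤ p*`. -/
def EntropyConstraint (ν : Measure T) (f : T → ℝ) (p : ℝ) (ps : ℝ≥0∞) (A : ℝ) : Prop :=
  (ps ≤ ENNReal.ofReal p → (A : EReal) ≤ entE ν f p ps) ∧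
    (ENNReal.ofReal p ≤ ps → entE ν f p ps ≤ A)

lemma EntropyConstraint.rnormInf_bound (h : EntropyConstraint ν f p ∞ A) (hf : Adm ν f)
    (hp : 0 < p) (hfin : rnorm ν f p ≠ ∞) :
    rnormInf ν f ≠ ∞ ∧
      Real.log (rnormInf ν f).toReal ≤ Real.log (rnorm ν f p).toReal + A / p := by
  have hle := h.2 le_top
  rw [entE, if_pos rfl, entTop] at hle
  have hinf : rnormInf ν f ≠ ∞ := fun hinf => by
    rw [if_pos hinf, if_pos hp] at hle
    exact EReal.coe_ne_top _ (top_le_iff.1 hle)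
  rw [if_neg hinf, elog_rnorm hf hp hfin, elog_of_ne (rnormInf_ne_zero hf) hinf, ← EReal.coe_sub,
    ← EReal.coe_mul, EReal.coe_le_coe_iff] at hle
  refine ⟨hinf, ?_⟩
  rw [← sub_le_iff_le_add', le_div_iff₀ hp]
  linarith

lemma entE_ofReal {r : ℝ} (hr : 0 < r) (hrp : r ≠ p) :
    entE ν f p (ENNReal.ofReal r) =
      ((p * r / (p - r) : ℝ) : EReal) * (elog (rnorm ν f p) - elog (rnorm ν f r)) := by
  rw [entE, if_neg ENNReal.ofReal_ne_top, ENNReal.toReal_ofReal hr.le, ent, if_neg hrp,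
    if_neg hr.ne']

lemma EntropyConstraint.rnorm_ne_top {r : ℝ} (h : EntropyConstraint ν f p (ENNReal.ofReal r) A)
    (hf : Adm ν f) (hp : 0 < p) (hr : 0 < r) (hfin : rnorm ν f p ≠ ∞) : rnorm ν f r ≠ ∞ := by
  intro htop
  have hrp : r ≠ p := by
    rintro rfl
    exact hfin htop
  have hbot : elog (rnorm ν f p) - elog (rnorm ν f r) = ⊥ := by
    rw [elog_rnorm hf hp hfin, htop]
    simp [elog]
  rw [EntropyConstraint, entE_ofReal hr hrp, hbot] at h
  rcases hrp.lt_or_gt with hlt | hgt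
  · have hle := h.1 (ENNReal.ofReal_le_ofReal hlt.le)
    rw [EReal.coe_mul_bot_of_pos (div_pos (mul_pos hp hr) (sub_pos.2 hlt))] at hle
    exact EReal.coe_ne_bot _ (le_bot_iff.1 hle)
  · have hle := h.2 (ENNReal.ofReal_le_ofReal hgt.le)
    rw [EReal.coe_mul_bot_of_neg (div_neg_of_pos_of_neg (mul_pos hp hr) (sub_neg.2 hgt))] at hle
    exact EReal.coe_ne_top _ (top_le_iff.1 hle)

lemma EntropyConstraint.log_rnorm_le {r : ℝ} (h : EntropyConstraint ν f p (ENNReal.ofReal r) A)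
    (hf : Adm ν f) (hp : 0 < p) (hr : 0 < r) (hfin : rnorm ν f p ≠ ∞) :
    Real.log (rnorm ν f r).toReal ≤ Real.log (rnorm ν f p).toReal + A / p - A / r := by
  obtain rfl | hrp := eq_or_ne r p
  · simp
  have hfinr := h.rnorm_ne_top hf hp hr hfin
  rw [EntropyConstraint, entE_ofReal hr hrp, elog_rnorm hf hp hfin, elog_rnorm hf hr hfinr,
    ← EReal.coe_sub, ← EReal.coe_mul, EReal.coe_le_coe_iff, EReal.coe_le_coe_iff] at h
  set L := Real.log (rnorm ν f p).toReal - Real.log (rnorm ν f r).toReal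
  have hsub : A / p - A / r = -(A / (p * r / (p - r))) := by
    have := sub_ne_zero.2 hrp.symm
    field_simp
    ring
  rcases hrp.lt_or_gt with hlt | hgt
  · have hc : 0 < p * r / (p - r) := div_pos (mul_pos hp hr) (sub_pos.2 hlt)
    have hle : A / (p * r / (p - r)) ≤ L :=
      (div_le_iff₀' hc).2 (h.1 (ENNReal.ofReal_le_ofReal hlt.le))
    linarith
  · have hc : p * r / (p - r) < 0 := div_neg_of_pos_of_neg (mul_pos hp hr) (sub_neg.2 hgt)
    have hle : A / (p * r / (p - r)) ≤ L :=
      (div_le_iff_of_neg' hc).2 (h.2 (ENNReal.ofReal_le_ofReal hgt.le))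
    linarith

variable [IsProbabilityMeasure Q] [IsProbabilityMeasure ν]

lemma EntropyConstraint.le_klDiv (h : EntropyConstraint ν f p 0 A) (hf : Adm ν f) (hp : p ≠ 0)
    (hpos : ∀ᵐ x ∂Q, 0 < f x) (hQ : klDiv Q ν ≠ ∞) : A ≤ (klDiv Q ν).toReal := by
  have hs : MeasurableSet {x | 0 < f x} := measurableSet_lt measurable_const hf.1
  have hν : ν {x | 0 < f x} ≠ 0 := fun h0 => by
    have hQ0 : Q {x | 0 < f x} = 0 := (klDiv_ne_top_iff.1 hQ).1 h0
    simp [prob_compl_eq_zero_iff hs |>.1 hpos] at hQ0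
  have hent : entE ν f p 0 = (-Real.log (ν {x | 0 < f x}).toReal : ℝ) := by
    rw [entE, if_neg ENNReal.zero_ne_top, ent, ENNReal.toReal_zero, if_neg hp.symm, if_pos rfl,
      elog_of_ne hν (measure_ne_top _ _), EReal.coe_neg]
  exact (EReal.coe_le_coe_iff.1 (hent ▸ h.1 zero_le)).trans (neg_log_measure_le_klDiv hs hpos hQ)

/- The three cases use `‖f‖_p`, `‖f‖_∞` and `‖f‖_{p*}` respectively; for `p* = 0` the coefficient
`(ps⁻¹).toReal` is the junk value `0` of `∞.toReal`. -/
lemma EntropyConstraint.integral_log_le (h : EntropyConstraint ν f p ps A) (hf : Adm ν f)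
    (hp : 0 < p) (hfin : rnorm ν f p ≠ ∞) (hpos : ∀ᵐ x ∂Q, 0 < f x)
    (hlog : Integrable (fun x => Real.log (f x)) Q) {a : ℝ} (ha : 0 ≤ a)
    (hQ : klDiv Q ν ≤ ENNReal.ofReal a) (h0 : ps = 0 → a ≤ A) :
    ∫ x, Real.log (f x) ∂Q ≤
      Real.log (rnorm ν f p).toReal + A / p + (ps⁻¹).toReal * (a - A) := by
  have hQfin : klDiv Q ν ≠ ∞ := ne_top_of_le_ne_top ENNReal.ofReal_ne_top hQ
  have hQa : (klDiv Q ν).toReal ≤ a := ENNReal.toReal_le_of_le_ofReal ha hQ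
  obtain rfl | hps0 := eq_or_ne ps 0
  · have hp_le : a / p ≤ A / p := by gcongr; exact h0 rfl
    calc ∫ x, Real.log (f x) ∂Q
      _ ≤ (klDiv Q ν).toReal / p + Real.log (rnorm ν f p).toReal :=
          integral_log_le_klDiv_div_add_log_rnorm hf hpos hlog hQfin hp hfin
      _ ≤ a / p + Real.log (rnorm ν f p).toReal := by gcongr
      _ ≤ _ := by simpa [add_comm] using hp_le
  obtain rfl | hpstop := eq_or_ne ps ∞
  · obtain ⟨hinf, hle⟩ := h.rnormInf_bound hf hp hfin
    simpa using (integral_log_le_log_rnormInf (klDiv_ne_top_iff.1 hQfin).1 hpos hlog hinf).trans hle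
  obtain ⟨r, hr, rfl⟩ : ∃ r : ℝ, 0 < r ∧ ps = ENNReal.ofReal r :=
    ⟨ps.toReal, ENNReal.toReal_pos hps0 hpstop, (ENNReal.ofReal_toReal hpstop).symm⟩
  calc ∫ x, Real.log (f x) ∂Q
    _ ≤ (klDiv Q ν).toReal / r + Real.log (rnorm ν f r).toReal :=
        integral_log_le_klDiv_div_add_log_rnorm hf hpos hlog hQfin hr
          (h.rnorm_ne_top hf hp hr hfin)
    _ ≤ a / r + (Real.log (rnorm ν f p).toReal + A / p - A / r) := by
        gcongr
        exact h.log_rnorm_le hf hp hr hfin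
    _ = _ := by
        rw [ENNReal.toReal_inv, ENNReal.toReal_ofReal hr.le]
        ring

end Entropy

section Subgradient

variable {u v : ℝ≥0∞} {x y : ℝ}

lemma coe_toReal_mul_le (hu : u = ∞ → 0 ≤ x) : ((u.toReal * x : ℝ) : EReal) ≤ u * x := by
  obtain rfl | hu' := eq_or_ne u ∞
  · simpa using mul_nonneg le_top (EReal.coe_nonneg.2 (hu rfl))
  · rw [EReal.coe_mul, EReal.coe_ennreal_toReal hu']

lemma eq_zero_of_top_mul_ne_top (hx : 0 ≤ x) (h : (⊤ : EReal) * x ≠ ⊤) : x = 0 := by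
  by_contra hx0
  exact h (EReal.top_mul_coe_of_pos (hx.lt_of_ne' hx0))

/- An extended-real subgradient inequality with finite right-hand side is a real one: `θ` is
finite, and an infinite slope forces the corresponding increment to vanish. -/
lemma toReal_add_le_of_add_coe_mul_le {θ : EReal} (hθ : θ ≠ ⊥) {d : ℝ} (hu : u = ∞ → 0 ≤ x)
    (hv : v = ∞ → 0 ≤ y) (h : θ + u * x + v * y ≤ d) :
    θ ≠ ⊤ ∧ (u = ∞ → x = 0) ∧ (v = ∞ → y = 0) ∧
      θ.toReal + u.toReal * x + v.toReal * y ≤ d := by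
  have hux := coe_toReal_mul_le hu
  have hvy := coe_toReal_mul_le hv
  have hux_bot : (u : EReal) * x ≠ ⊥ := ne_bot_of_le_ne_bot (EReal.coe_ne_bot _) hux
  have hvy_bot : (v : EReal) * y ≠ ⊥ := ne_bot_of_le_ne_bot (EReal.coe_ne_bot _) hvy
  have hsum_bot : θ + u * x ≠ ⊥ := EReal.add_ne_bot_iff.2 ⟨hθ, hux_bot⟩
  obtain ⟨hsum_top, hvy_top⟩ := (EReal.add_ne_top_iff_ne_top₂ hsum_bot hvy_bot).1
    (ne_top_of_le_ne_top (EReal.coe_ne_top d) h)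
  obtain ⟨hθ_top, hux_top⟩ := (EReal.add_ne_top_iff_ne_top₂ hθ hux_bot).1 hsum_top
  refine ⟨hθ_top, ?_, ?_, ?_⟩
  · rintro rfl
    exact eq_zero_of_top_mul_ne_top (hu rfl) hux_top
  · rintro rfl
    exact eq_zero_of_top_mul_ne_top (hv rfl) hvy_top
  · rw [← EReal.coe_le_coe_iff, EReal.coe_add, EReal.coe_add, EReal.coe_toReal hθ_top hθ]
    exact (add_le_add (add_le_add_right hux θ) hvy).trans h

end Subgradient

section GibbsMeasure

lemma mul_mem_Icc_mul_self {δ K a b : ℝ} (hδ : 0 ≤ δ) (ha : a ∈ Icc δ K) (hb : b ∈ Icc δ K) :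
    a * b ∈ Icc (δ * δ) (K * K) :=
  ⟨mul_le_mul ha.1 hb.1 hδ (hδ.trans ha.1),
    mul_le_mul ha.2 hb.2 (hδ.trans hb.1) (hδ.trans (ha.1.trans ha.2))⟩

variable {Z : Type*} [MeasurableSpace Z] {μ : Measure Z} {S : Set Z} {H : Z → ℝ} {δ K : ℝ}

lemma setLIntegral_ofReal_ne_zero (hH : Measurable H)
    (hpos : ∀ z ∈ S, 0 < H z) (hμS : μ S ≠ 0) : ∫⁻ z in S, ENNReal.ofReal (H z) ∂μ ≠ 0 := by
  rw [← pos_iff_ne_zero, setLIntegral_pos_iff hH.ennreal_ofReal]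
  refine (pos_iff_ne_zero.2 hμS).trans_le (measure_mono fun z hz => ⟨?_, hz⟩)
  simpa using hpos z hz

lemma setLIntegral_ofReal_ne_top [IsFiniteMeasure μ] (hS : MeasurableSet S)
    (hK : ∀ z ∈ S, H z ≤ K) : ∫⁻ z in S, ENNReal.ofReal (H z) ∂μ ≠ ∞ := by
  have hle : ∫⁻ z in S, ENNReal.ofReal (H z) ∂μ ≤ ENNReal.ofReal K * μ S := by
    rw [← setLIntegral_const]
    exact setLIntegral_mono' hS fun z hz => ENNReal.ofReal_le_ofReal (hK z hz)
  exact ne_top_of_le_ne_top (ENNReal.mul_ne_top ENNReal.ofReal_ne_top (measure_ne_top μ S)) hle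

lemma integrable_log_of_mem_Icc {Q : Measure Z} [IsFiniteMeasure Q] (hH : Measurable H)
    (hδ : 0 < δ) (h : ∀ᵐ z ∂Q, H z ∈ Icc δ K) : Integrable (fun z => Real.log (H z)) Q :=
  Integrable.of_mem_Icc (Real.log δ) (Real.log K) hH.log.aemeasurable <| h.mono fun _ hz =>
    ⟨Real.log_le_log hδ hz.1, Real.log_le_log (hδ.trans_le hz.1) hz.2⟩

/- The equality case of Gibbs' inequality: `Q` has density proportional to `H` on `S`. -/
lemma exists_klDiv_eq_integral_log_sub [IsProbabilityMeasure μ] (hS : MeasurableSet S)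
    (hH : Measurable H) (hδ : 0 < δ) (hHS : ∀ z ∈ S, H z ∈ Icc δ K) (hμS : μ S ≠ 0) :
    ∃ Q : Measure Z, IsProbabilityMeasure Q ∧ (∀ᵐ z ∂Q, z ∈ S) ∧ klDiv Q μ ≠ ∞ ∧
      (klDiv Q μ).toReal = ∫ z, Real.log (H z) ∂Q -
        Real.log (∫⁻ z in S, ENNReal.ofReal (H z) ∂μ).toReal := by
  set I := ∫⁻ z in S, ENNReal.ofReal (H z) ∂μ
  have hHpos : ∀ z ∈ S, 0 < H z := fun z hz => hδ.trans_le (hHS z hz).1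
  have hI0 : I ≠ 0 := setLIntegral_ofReal_ne_zero hH hHpos hμS
  have hI : I ≠ ∞ := setLIntegral_ofReal_ne_top hS fun z hz => (hHS z hz).2
  set φ : Z → ℝ≥0∞ := S.indicator fun z => ENNReal.ofReal (H z) / I
  have hφ : Measurable φ := (hH.ennreal_ofReal.div_const I).indicator hS
  have hφS : ∀ z ∈ S, φ z = ENNReal.ofReal (H z) / I := fun z hz => indicator_of_mem hz _
  set Q := μ.withDensity φ
  have hQ : IsProbabilityMeasure Q := ⟨by
    rw [withDensity_apply _ .univ, setLIntegral_univ, lintegral_indicator hS]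
    simp only [div_eq_mul_inv]
    rw [lintegral_mul_const _ hH.ennreal_ofReal, ENNReal.mul_inv_cancel hI0 hI]⟩
  have hQS : ∀ᵐ z ∂Q, z ∈ S := (ae_withDensity_iff hφ).2 <|
    Eventually.of_forall fun z hz => mem_of_indicator_ne_zero hz
  have hac : Q ≪ μ := withDensity_absolutelyContinuous μ φ
  have hllr : llr Q μ =ᵐ[Q] fun z => Real.log (H z) - Real.log I.toReal := by
    filter_upwards [hac.ae_le (μ.rnDeriv_withDensity hφ), hQS] with z hz hzS
    rw [llr, hz, hφS z hzS, ENNReal.toReal_div, ENNReal.toReal_ofReal (hHpos z hzS).le,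
      Real.log_div (hHpos z hzS).ne' (ENNReal.toReal_pos hI0 hI).ne']
  have hlog : Integrable (fun z => Real.log (H z)) Q :=
    integrable_log_of_mem_Icc hH hδ (hQS.mono hHS)
  refine ⟨Q, hQ, hQS, klDiv_ne_top hac ?_, ?_⟩
  · exact (hlog.sub (integrable_const _)).congr hllr.symm
  · rw [toReal_klDiv_of_measure_eq hac (by simp), integral_congr_ae hllr,
      integral_sub hlog (integrable_const _)]
    simp

lemma exists_klDiv_eq_integral_log_add [IsProbabilityMeasure μ] {F G : Z → ℝ}
    (hS : MeasurableSet S) (hF : Measurable F) (hG : Measurable G) (hδ : 0 < δ)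
    (hFS : ∀ z ∈ S, F z ∈ Icc δ K) (hGS : ∀ z ∈ S, G z ∈ Icc δ K) (hμS : μ S ≠ 0) :
    ∃ Q : Measure Z, IsProbabilityMeasure Q ∧ (∀ᵐ z ∂Q, z ∈ S) ∧ klDiv Q μ ≠ ∞ ∧
      (klDiv Q μ).toReal = ∫ z, Real.log (F z) ∂Q + ∫ z, Real.log (G z) ∂Q -
        Real.log (∫⁻ z in S, ENNReal.ofReal (F z * G z) ∂μ).toReal := by
  obtain ⟨Q, hQ, hQS, hQfin, hQeq⟩ := exists_klDiv_eq_integral_log_sub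
    (H := fun z => F z * G z) hS (hF.mul hG) (mul_pos hδ hδ)
    (fun z hz => mul_mem_Icc_mul_self hδ.le (hFS z hz) (hGS z hz)) hμS
  refine ⟨Q, hQ, hQS, hQfin, ?_⟩
  rw [hQeq, ← integral_add (integrable_log_of_mem_Icc hF hδ (hQS.mono hFS))
    (integrable_log_of_mem_Icc hG hδ (hQS.mono hGS))]
  congr 1
  refine integral_congr_ae (hQS.mono fun z hz => ?_)
  exact Real.log_mul (hδ.trans_le (hFS z hz).1).ne' (hδ.trans_le (hGS z hz).1).ne'

end GibbsMeasure

section EntropyMap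

variable {Z T : Type*} [MeasurableSpace Z] [MeasurableSpace T] {ν : Measure T}
  [IsProbabilityMeasure ν] {Q : Measure Z} [IsProbabilityMeasure Q] {π : Z → T} {f : T → ℝ}
  {p A a : ℝ} {ps : ℝ≥0∞}

lemma EntropyConstraint.le_of_klDiv_map_le (h : EntropyConstraint ν f p 0 A) (hf : Adm ν f)
    (hp : p ≠ 0) (hπ : Measurable π) (hpos : ∀ᵐ z ∂Q, 0 < f (π z)) (ha : 0 ≤ a)
    (hQ : klDiv (Q.map π) ν ≤ ENNReal.ofReal a) : A ≤ a := by
  have := Measure.isProbabilityMeasure_map (μ := Q) hπ.aemeasurable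
  have hposπ : ∀ᵐ x ∂Q.map π, 0 < f x :=
    (ae_map_iff hπ.aemeasurable (measurableSet_lt measurable_const hf.1)).2 hpos
  exact (h.le_klDiv hf hp hposπ (ne_top_of_le_ne_top ENNReal.ofReal_ne_top hQ)).trans
    (ENNReal.toReal_le_of_le_ofReal ha hQ)

lemma EntropyConstraint.integral_log_comp_le (h : EntropyConstraint ν f p ps A) (hf : Adm ν f)
    (hp : 0 < p) (hfin : rnorm ν f p ≠ ∞) (hπ : Measurable π) (hpos : ∀ᵐ z ∂Q, 0 < f (π z))
    (hlog : Integrable (fun z => Real.log (f (π z))) Q) (ha : 0 ≤ a)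
    (hQ : klDiv (Q.map π) ν ≤ ENNReal.ofReal a) (h0 : ps = 0 → a ≤ A) :
    ∫ z, Real.log (f (π z)) ∂Q ≤
      Real.log (rnorm ν f p).toReal + A / p + (ps⁻¹).toReal * (a - A) := by
  have := Measure.isProbabilityMeasure_map (μ := Q) hπ.aemeasurable
  have hm : AEStronglyMeasurable (fun x => Real.log (f x)) (Q.map π) :=
    hf.1.log.aestronglyMeasurable
  have hposπ : ∀ᵐ x ∂Q.map π, 0 < f x :=
    (ae_map_iff hπ.aemeasurable (measurableSet_lt measurable_const hf.1)).2 hpos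
  rw [← integral_map hπ.aemeasurable hm]
  exact h.integral_log_le hf hp hfin hposπ ((integrable_map_measure hm hπ.aemeasurable).2 hlog)
    ha hQ h0

end EntropyMap

section Law

variable {P : Measure (X × Y)} [IsProbabilityMeasure P] {α β p q : ℝ} {ps qs : ℝ≥0∞} {n : ℕ}
  {f : (Fin n → X) → ℝ} {g : (Fin n → Y) → ℝ} {Q : Measure (Fin n → X × Y)}
  [IsProbabilityMeasure Q]

/-- `x` is a single-letter bound for `Q` at which the subgradient inequality of `Θ̲` at `(α, β)`
holds between real numbers, `Θ̲(α, β)` being finite. -/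
structure IsSubgradientPoint (P : Measure (X × Y)) (n : ℕ) (α β : ℝ) (ps qs : ℝ≥0∞)
    (Q : Measure (Fin n → X × Y)) (x : ℝ × ℝ × ℝ) : Prop where
  nonneg : 0 ≤ x
  bound : IsSingleLetterBound P n Q x
  ne_top : ThetaL P α β ≠ ⊤
  fst_eq : ps = 0 → x.1 = α
  snd_eq : qs = 0 → x.2.1 = β
  le : (ThetaL P α β).toReal + (ps⁻¹).toReal * (x.1 - α) + (qs⁻¹).toReal * (x.2.1 - β) ≤ x.2.2

lemma IsSubgradientPoint.integral_log_add_integral_log_le {x : ℝ × ℝ × ℝ}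
    (hx : IsSubgradientPoint P n α β ps qs Q x) (hp : 0 < p) (hq : 0 < q)
    (hf : Adm (piM n (m1 P)) f) (hg : Adm (piM n (m2 P)) g)
    (hfα : EntropyConstraint (piM n (m1 P)) f p ps (n * α))
    (hgβ : EntropyConstraint (piM n (m2 P)) g q qs (n * β))
    (hf_fin : rnorm (piM n (m1 P)) f p ≠ ∞) (hg_fin : rnorm (piM n (m2 P)) g q ≠ ∞)
    (hfpos : ∀ᵐ z ∂Q, 0 < f (fstv z)) (hgpos : ∀ᵐ z ∂Q, 0 < g (sndv z))
    (hflog : Integrable (fun z => Real.log (f (fstv z))) Q)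
    (hglog : Integrable (fun z => Real.log (g (sndv z))) Q) :
    ∫ z, Real.log (f (fstv z)) ∂Q + ∫ z, Real.log (g (sndv z)) ∂Q ≤
      (klDiv Q (piM n P)).toReal + -n * ((ThetaL P α β).toReal - (α / p + β / q)) +
        Real.log (rnorm (piM n (m1 P)) f p).toReal +
        Real.log (rnorm (piM n (m2 P)) g q).toReal := by
  obtain ⟨hQ₁, hQ₂, hQ₃⟩ := hx.bound
  have hf_le := hfα.integral_log_comp_le hf hp hf_fin measurable_fstv hfpos hflog
    (mul_nonneg n.cast_nonneg hx.nonneg.1) hQ₁ fun h => by rw [hx.fst_eq h]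
  have hg_le := hgβ.integral_log_comp_le hg hq hg_fin measurable_sndv hgpos hglog
    (mul_nonneg n.cast_nonneg hx.nonneg.2.1) hQ₂ fun h => by rw [hx.snd_eq h]
  have hD : (klDiv Q (piM n P)).toReal = n * x.2.2 := by
    rw [hQ₃, ENNReal.toReal_ofReal (mul_nonneg n.cast_nonneg hx.nonneg.2.2)]
  have hsub := mul_le_mul_of_nonneg_left hx.le (n.cast_nonneg (α := ℝ))
  rw [hD]
  linear_combination hf_le + hg_le + hsub

variable [StandardBorelSpace X] [StandardBorelSpace Y]

lemma exists_isSubgradientPoint (hgrad : IsSubgrad2 (ThetaL P) α β ps⁻¹ qs⁻¹)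
    (hp : p ≠ 0) (hq : q ≠ 0) (hn : 0 < n)
    (hf : Adm (piM n (m1 P)) f) (hg : Adm (piM n (m2 P)) g)
    (hfα : EntropyConstraint (piM n (m1 P)) f p ps (n * α))
    (hgβ : EntropyConstraint (piM n (m2 P)) g q qs (n * β)) (hQ : klDiv Q (piM n P) ≠ ∞)
    (hfpos : ∀ᵐ z ∂Q, 0 < f (fstv z)) (hgpos : ∀ᵐ z ∂Q, 0 < g (sndv z)) :
    ∃ x, IsSubgradientPoint P n α β ps qs Q x := by
  obtain ⟨x, hx, hxQ⟩ := exists_mem_divergenceRegion_piM n hQ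
  have hx0 := nonneg_of_mem_divergenceRegion hx
  have hn' : (0 : ℝ) < n := Nat.cast_pos.2 hn
  have hα : ps⁻¹ = ∞ → 0 ≤ x.1 - α := fun h => by
    rw [ENNReal.inv_eq_top.1 h] at hfα
    exact sub_nonneg.2 <| le_of_mul_le_mul_left (hfα.le_of_klDiv_map_le hf hp measurable_fstv
      hfpos (mul_nonneg hn'.le hx0.1) hxQ.1) hn'
  have hβ : qs⁻¹ = ∞ → 0 ≤ x.2.1 - β := fun h => by
    rw [ENNReal.inv_eq_top.1 h] at hgβ
    exact sub_nonneg.2 <| le_of_mul_le_mul_left (hgβ.le_of_klDiv_map_le hg hq measurable_sndv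
      hgpos (mul_nonneg hn'.le hx0.2.1) hxQ.2.1) hn'
  obtain ⟨htop, hα_eq, hβ_eq, hle⟩ := toReal_add_le_of_add_coe_mul_le ThetaL_ne_bot hα hβ
    ((hgrad x.1 x.2.1 hx0.1 hx0.2.1).trans (ThetaL_le_of_mem_divergenceRegion hx))
  exact ⟨x, hx0, hxQ, htop, fun h => sub_eq_zero.1 (hα_eq (ENNReal.inv_eq_top.2 h)),
    fun h => sub_eq_zero.1 (hβ_eq (ENNReal.inv_eq_top.2 h)), hle⟩

end Law

section Truncation

variable {Z : Type*} {F G : Z → ℝ}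

/-- The set on which `F` lies between `1 / (k + 1)` and `k + 1`; these sets exhaust `{0 < F}`. -/
def truncationSet (F : Z → ℝ) (k : ℕ) : Set Z := F ⁻¹' Icc ((k : ℝ) + 1)⁻¹ (k + 1)

lemma monotone_truncationSet : Monotone (truncationSet F) := fun k l hkl z hz =>
  ⟨le_trans (by gcongr) hz.1, hz.2.trans (by gcongr)⟩

lemma measurableSet_truncationSet [MeasurableSpace Z] (hF : Measurable F) (k : ℕ) :
    MeasurableSet (truncationSet F k) := hF measurableSet_Icc

lemma eventually_mem_truncationSet {z : Z} (hz : 0 < F z) :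
    ∀ᶠ k in atTop, z ∈ truncationSet F k := by
  have hk : Tendsto (fun k : ℕ => (k : ℝ) + 1) atTop atTop :=
    tendsto_atTop_add_const_right _ _ tendsto_natCast_atTop_atTop
  filter_upwards [hk.inv_tendsto_atTop.eventually_le_const hz, hk.eventually_ge_atTop (F z)]
    with k h₁ h₂ using ⟨h₁, h₂⟩

lemma lintegral_mul_le_of_forall_truncationSet [MeasurableSpace Z] {μ : Measure Z} {C : ℝ≥0∞}
    (h : ∀ k, ∫⁻ z in truncationSet F k ∩ truncationSet G k,
      ENNReal.ofReal (F z) * ENNReal.ofReal (G z) ∂μ ≤ C) :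
    ∫⁻ z, ENNReal.ofReal (F z) * ENNReal.ofReal (G z) ∂μ ≤ C := by
  set S : ℕ → Set Z := fun k => truncationSet F k ∩ truncationSet G k
  have hS : Monotone S := monotone_truncationSet.inter monotone_truncationSet
  have hsupp : Function.support (fun z => ENNReal.ofReal (F z) * ENNReal.ofReal (G z)) ⊆
      ⋃ k, S k := fun z hz => by
    have hF0 : 0 < F z := ENNReal.ofReal_pos.1 (pos_iff_ne_zero.2 (left_ne_zero_of_mul hz))
    have hG0 : 0 < G z := ENNReal.ofReal_pos.1 (pos_iff_ne_zero.2 (right_ne_zero_of_mul hz))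
    obtain ⟨k, hk⟩ :=
      ((eventually_mem_truncationSet hF0).and (eventually_mem_truncationSet hG0)).exists
    exact mem_iUnion_of_mem k hk
  rw [← setLIntegral_eq_of_support_subset hsupp, setLIntegral_iUnion_of_directed _ hS.directed_le]
  exact iSup_le h

end Truncation

section BrascampLieb

variable {P : Measure (X × Y)} [IsProbabilityMeasure P] {α β p q : ℝ} {ps qs : ℝ≥0∞} {n : ℕ}
  {f : (Fin n → X) → ℝ} {g : (Fin n → Y) → ℝ}

lemma eexp_neg_mul_sub_of_ne {θ : EReal} (htop : θ ≠ ⊤) (hbot : θ ≠ ⊥) (c d : ℝ) :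
    eexp (((-c : ℝ) : EReal) * (θ - (d : EReal))) =
      ENNReal.ofReal (Real.exp (-c * (θ.toReal - d))) := by
  lift θ to ℝ using ⟨htop, hbot⟩
  rw [← EReal.coe_sub, ← EReal.coe_mul, eexp, if_neg (EReal.coe_ne_bot _),
    if_neg (EReal.coe_ne_top _), EReal.toReal_coe, EReal.toReal_coe]

lemma le_ofReal_exp_mul_mul {a b c : ℝ≥0∞} {t : ℝ} (ha0 : a ≠ 0) (ha : a ≠ ∞) (hb : b ≠ 0)
    (hc : c ≠ 0)
    (h : b ≠ ∞ → c ≠ ∞ → Real.log a.toReal ≤ t + Real.log b.toReal + Real.log c.toReal) :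
    a ≤ ENNReal.ofReal (Real.exp t) * b * c := by
  have hexp : ENNReal.ofReal (Real.exp t) ≠ 0 := (ENNReal.ofReal_pos.2 (Real.exp_pos t)).ne'
  obtain rfl | hb_top := eq_or_ne b ∞
  · rw [ENNReal.mul_top hexp, ENNReal.top_mul hc]
    exact le_top
  obtain rfl | hc_top := eq_or_ne c ∞
  · rw [ENNReal.mul_top (mul_ne_zero hexp hb)]
    exact le_top
  have hb_pos := ENNReal.toReal_pos hb hb_top
  have hc_pos := ENNReal.toReal_pos hc hc_top
  rw [← ENNReal.toReal_le_toReal ha (by finiteness), ENNReal.toReal_mul, ENNReal.toReal_mul,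
    ENNReal.toReal_ofReal (Real.exp_pos t).le,
    ← Real.log_le_log_iff (ENNReal.toReal_pos ha0 ha) (by positivity),
    Real.log_mul (by positivity) hc_pos.ne', Real.log_mul (by positivity) hb_pos.ne', Real.log_exp]
  exact h hb_top hc_top

variable [StandardBorelSpace X] [StandardBorelSpace Y]

lemma setLIntegral_le_of_mem_Icc (hgrad : IsSubgrad2 (ThetaL P) α β ps⁻¹ qs⁻¹)
    (hp : 0 < p) (hq : 0 < q) (hn : 0 < n)
    (hf : Adm (piM n (m1 P)) f) (hg : Adm (piM n (m2 P)) g)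
    (hfα : EntropyConstraint (piM n (m1 P)) f p ps (n * α))
    (hgβ : EntropyConstraint (piM n (m2 P)) g q qs (n * β)) {S : Set (Fin n → X × Y)}
    (hS : MeasurableSet S) {δ K : ℝ} (hδ : 0 < δ) (hfS : ∀ z ∈ S, f (fstv z) ∈ Icc δ K)
    (hgS : ∀ z ∈ S, g (sndv z) ∈ Icc δ K) :
    ∫⁻ z in S, ENNReal.ofReal (f (fstv z)) * ENNReal.ofReal (g (sndv z)) ∂piM n P ≤
      eexp (((-(n : ℝ) : ℝ) : EReal) * (ThetaL P α β - ((α / p + β / q : ℝ) : EReal)))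
        * rnorm (piM n (m1 P)) f p * rnorm (piM n (m2 P)) g q := by
  obtain hS0 | hS0 := eq_or_ne (piM n P S) 0
  · rw [setLIntegral_measure_zero S _ hS0]
    exact zero_le
  have hfm : Measurable fun z : Fin n → X × Y => f (fstv z) := hf.1.comp measurable_fstv
  have hgm : Measurable fun z : Fin n → X × Y => g (sndv z) := hg.1.comp measurable_sndv
  obtain ⟨Q, hQ, hQS, hQfin, hQeq⟩ :=
    exists_klDiv_eq_integral_log_add hS hfm hgm hδ hfS hgS hS0
  have hfpos : ∀ᵐ z ∂Q, 0 < f (fstv z) := hQS.mono fun z hz => hδ.trans_le (hfS z hz).1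
  have hgpos : ∀ᵐ z ∂Q, 0 < g (sndv z) := hQS.mono fun z hz => hδ.trans_le (hgS z hz).1
  have hflog := integrable_log_of_mem_Icc hfm hδ (hQS.mono hfS)
  have hglog := integrable_log_of_mem_Icc hgm hδ (hQS.mono hgS)
  obtain ⟨x, hx⟩ := exists_isSubgradientPoint hgrad hp.ne' hq.ne' hn hf hg hfα hgβ hQfin
    hfpos hgpos
  have hlower : ∀ z ∈ S, 0 < f (fstv z) * g (sndv z) := fun z hz =>
    mul_pos (hδ.trans_le (hfS z hz).1) (hδ.trans_le (hgS z hz).1)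
  have hupper : ∀ z ∈ S, f (fstv z) * g (sndv z) ≤ K * K := fun z hz =>
    (mul_mem_Icc_mul_self hδ.le (hfS z hz) (hgS z hz)).2
  simp only [← ENNReal.ofReal_mul (hf.2.1 _)]
  rw [eexp_neg_mul_sub_of_ne hx.ne_top ThetaL_ne_bot]
  refine le_ofReal_exp_mul_mul (setLIntegral_ofReal_ne_zero (hfm.mul hgm) hlower hS0)
    (setLIntegral_ofReal_ne_top hS hupper) (rnorm_ne_zero hf hp) (rnorm_ne_zero hg hq)
    fun hf_fin hg_fin => ?_
  have hdual := hx.integral_log_add_integral_log_le hp hq hf hg hfα hgβ hf_fin hg_fin hfpos hgpos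
    hflog hglog
  linear_combination hdual + hQeq

end BrascampLieb

/-- Strong forward Brascamp–Lieb inequality, two-function version with
envelopes; Theorem `thm:strongBL`, part 1. -/
theorem statement2 [TopologicalSpace X] [PolishSpace X] [BorelSpace X]
    [TopologicalSpace Y] [PolishSpace Y] [BorelSpace Y]
    (P : Measure (X × Y)) [IsProbabilityMeasure P]
    (hndX : ∀ x : X, m1 P ≠ Measure.dirac x) (hndY : ∀ y : Y, m2 P ≠ Measure.dirac y)
    (α β : ℝ) (hα0 : 0 ≤ α) (hαmax : (α : EReal) ≤ alphaMax (m1 P))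
    (hβ0 : 0 ≤ β) (hβmax : (β : EReal) ≤ alphaMax (m2 P))
    (ps qs : ℝ≥0∞) (hgrad : IsSubgrad2 (fun s t => ThetaL P s t) α β ps⁻¹ qs⁻¹)
    (p q : ℝ) (hp : 0 < p) (hq : 0 < q)
    (n : ℕ) (hn : 1 ≤ n)
    (f : (Fin n → X) → ℝ) (g : (Fin n → Y) → ℝ)
    (hf : Adm (piM n (m1 P)) f) (hg : Adm (piM n (m2 P)) g)
    (hf1 : ps ≤ ENNReal.ofReal p →
      (((n : ℝ) * α : ℝ) : EReal) ≤ entE (piM n (m1 P)) f p ps)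
    (hf2 : ENNReal.ofReal p ≤ ps →
      entE (piM n (m1 P)) f p ps ≤ (((n : ℝ) * α : ℝ) : EReal))
    (hg1 : qs ≤ ENNReal.ofReal q →
      (((n : ℝ) * β : ℝ) : EReal) ≤ entE (piM n (m2 P)) g q qs)
    (hg2 : ENNReal.ofReal q ≤ qs →
      entE (piM n (m2 P)) g q qs ≤ (((n : ℝ) * β : ℝ) : EReal)) :
    innerFG P n f g ≤
      eexp (((-(n : ℝ) : ℝ) : EReal) * (ThetaL P α β - ((α / p + β / q : ℝ) : EReal)))
        * rnorm (piM n (m1 P)) f p * rnorm (piM n (m2 P)) g q := by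
  refine lintegral_mul_le_of_forall_truncationSet fun k => ?_
  have hS := (measurableSet_truncationSet (hf.1.comp measurable_fstv) k).inter
    (measurableSet_truncationSet (hg.1.comp measurable_sndv) k)
  exact setLIntegral_le_of_mem_Icc hgrad hp hq hn hf hg ⟨hf1, hf2⟩ ⟨hg1, hg2⟩ hS
    (inv_pos.2 k.cast_add_one_pos) (fun _ hz => hz.1) (fun _ hz => hz.2)

end BL
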